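/- arXiv:2212.01273 — 2 statements merged into one kernel-verified Lean document; each statement's English description precedes it below -/
import Mathlib

section
/- Let g be a finite-dimensional perfect complex Lie algebra with Z(g) = 0, with Levi decomposition g = sl2(C) ⋉ h (the Levi subalgebra is isomorphic to sl2(C)), whose radical h decomposes into 4 simple sl2(C)-modules V_n, V_m, V_p, V_k satisfying the convention, with Z(h) = V_k. If dim_C g < 25, then g is not sympathetic. -/
namespace Symp

variable (g : Type*) [LieRing g] [LieAlgebra ℂ g]

/-- A derivation of `g` is inner if it is given by the adjoint action of some element. -/
def IsInnerDer {g : Type*} [LieRing g] [LieAlgebra ℂ g] (D : LieDerivation ℂ g g) : Prop :=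
  ∃ x : g, ∀ y : g, D y = ⁅x, y⁆

/-- `g` is perfect: `[g,g] = g`. -/
def IsPerfectLie : Prop :=
  ⁅(⊤ : LieIdeal ℂ g), (⊤ : LieIdeal ℂ g)⁆ = ⊤

/-- A sympathetic Lie algebra: trivial centre, perfect, all derivations inner. -/
def IsSympathetic : Prop :=
  LieAlgebra.center ℂ g = ⊥ ∧ IsPerfectLie g ∧
    ∀ D : LieDerivation ℂ g g, IsInnerDer D

/-- `s` is a simple Levi subalgebra of `g`: it is a simple Lie algebra and a vector-space
complement to the radical. -/
def IsSimpleLevi (s : LieSubalgebra ℂ g) : Prop :=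
  LieAlgebra.IsSimple ℂ s ∧
    IsCompl s.toSubmodule (LieAlgebra.radical ℂ g).toSubmodule

/-- `s` is a Levi subalgebra of `g` isomorphic to `sl₂(ℂ)`. -/
def IsSl2Levi (s : LieSubalgebra ℂ g) : Prop :=
  Nonempty (s ≃ₗ⁅ℂ⁆ LieAlgebra.SpecialLinear.sl (Fin 2) ℂ) ∧
    IsCompl s.toSubmodule (LieAlgebra.radical ℂ g).toSubmodule

/-- The subspace spanned by all brackets `⁅x, y⁆` with `x ∈ A`, `y ∈ B`. -/
def lieSpan2 (A B : Submodule ℂ g) : Submodule ℂ g :=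
  Submodule.span ℂ {z : g | ∃ x ∈ A, ∃ y ∈ B, z = ⁅x, y⁆}

/-- A subspace of `g` invariant under the bracket action of the subalgebra `s`. -/
def Invariant (s : LieSubalgebra ℂ g) (W : Submodule ℂ g) : Prop :=
  ∀ x ∈ s, ∀ w ∈ W, ⁅x, w⁆ ∈ W

/-- `V` is an irreducible `s`-submodule of `g`. -/
def IsIrreducibleSMod (s : LieSubalgebra ℂ g) (V : Submodule ℂ g) : Prop :=
  V ≠ ⊥ ∧ Invariant g s V ∧
    ∀ W : Submodule ℂ g, W ≤ V → Invariant g s W → W = ⊥ ∨ W = V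

/-- The family `V` is a decomposition of the radical of `g` into irreducible `s`-modules. -/
def IsDecomp (s : LieSubalgebra ℂ g) {k : ℕ} (V : Fin k → Submodule ℂ g) : Prop :=
  (∀ i, IsIrreducibleSMod g s (V i)) ∧ iSupIndep V ∧
    (⨆ i, V i) = (LieAlgebra.radical ℂ g).toSubmodule

/-- The convention: any nonzero bracket of two of the modules equals one of them,
for a unique index. -/
def Convention {k : ℕ} (V : Fin k → Submodule ℂ g) : Prop :=
  ∀ i j, lieSpan2 g (V i) (V j) ≠ ⊥ → ∃! q, lieSpan2 g (V i) (V j) = V q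

/-- The centre `Z(h)` of the radical `h = Rad(g)`, as a subspace of `g`. -/
def centerRad : Submodule ℂ g where
  carrier := {x | x ∈ LieAlgebra.radical ℂ g ∧ ∀ y ∈ LieAlgebra.radical ℂ g, ⁅x, y⁆ = 0}
  add_mem' := by
    rintro a b ⟨ha, ha'⟩ ⟨hb, hb'⟩
    exact ⟨add_mem ha hb, fun y hy => by rw [add_lie, ha' y hy, hb' y hy, add_zero]⟩
  zero_mem' := ⟨zero_mem _, fun y _ => zero_lie y⟩
  smul_mem' := by
    rintro c a ⟨ha, ha'⟩
    exact ⟨SMulMemClass.smul_mem c ha, fun y hy => by rw [smul_lie, ha' y hy, smul_zero]⟩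

/-- The derived subalgebra `[h,h]` of the radical `h = Rad(g)`, as a subspace of `g`. -/
def derivedRad : Submodule ℂ g :=
  lieSpan2 g (LieAlgebra.radical ℂ g).toSubmodule (LieAlgebra.radical ℂ g).toSubmodule

end Symp

namespace Symp18

/-- The combinatorial outcome in the case of exactly two generators `a`, `b`. -/
def Outcome (R : Fin 4 → Fin 4 → Fin 4 → Prop) (a b c : Fin 4) : Prop :=
  (a ≠ b ∧ a ≠ c ∧ b ≠ c ∧ a ≠ 3 ∧ b ≠ 3 ∧ c ≠ 3) ∧ (∀ i j, ¬ R i j a) ∧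
    ((∃ w : Fin 4 → ℂ, w a ≠ 0 ∧ ∀ i j q, R i j q → w i + w j = w q) ∨
      ((∀ i j, ¬ R i j b) ∧ R b b 3 ∧ R a c 3 ∧
        ((R a b c ∧ R b c 3) ∨ (R a b c ∧ (∀ q, ¬ R b c q) ∧ (R a a c ∨ R a a 3)) ∨
          (R a a c ∧ R a b 3))))

theorem weight_exists {R : Fin 4 → Fin 4 → Fin 4 → Prop} {a b c : Fin 4}
    (hd : a ≠ b ∧ a ≠ c ∧ b ≠ c ∧ a ≠ 3 ∧ b ≠ 3 ∧ c ≠ 3) (wa wb wc wk : ℂ) (ha : wa ≠ 0)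
    (hR : ∀ w : Fin 4 → ℂ, w a = wa → w b = wb → w c = wc → w 3 = wk →
      ∀ i j q, R i j q → w i + w j = w q) :
    ∃ w : Fin 4 → ℂ, w a ≠ 0 ∧ ∀ i j q, R i j q → w i + w j = w q := by
  obtain ⟨h1, h2, h3, h4, h5, h6⟩ := hd
  refine ⟨fun i => if i = a then wa else if i = b then wb else if i = c then wc else wk,
    by simpa using ha, hR _ ?_ ?_ ?_ ?_⟩
  · simp
  · simp [h1.symm]
  · simp [h2.symm, h3.symm]
  · simp [h4.symm, h5.symm, h6.symm]

theorem cover {a b c : Fin 4}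
    (hd : a ≠ b ∧ a ≠ c ∧ b ≠ c ∧ a ≠ 3 ∧ b ≠ 3 ∧ c ≠ 3) (i : Fin 4) :
    i = a ∨ i = b ∨ i = c ∨ i = 3 := by
  revert a b c i; decide

section
variable {R : Fin 4 → Fin 4 → Fin 4 → Prop}

theorem two_gen_aux
    (sym : ∀ i j q, R i j q → R j i q)
    (func : ∀ i j q q', R i j q → R i j q' → q = q')
    (cent : ∀ j q, ¬ R 3 j q)
    (acyc : ∀ i j, ¬ R i j j)
    (jac : ∀ l m j i q, R l m j → R i j q →
    (∃ j', R i m j' ∧ R l j' q) ∨ (∃ j', R i l j' ∧ R m j' q))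
    {a b c : Fin 4}
    (hd : a ≠ b ∧ a ≠ c ∧ b ≠ c ∧ a ≠ 3 ∧ b ≠ 3 ∧ c ≠ 3)
    (ha : ∀ i j, ¬ R i j a) (hb : ∀ i j, ¬ R i j b) (hc : ∃ i j, R i j c)
    (hac : R a c 3) : ∃ a b c, Outcome R a b c := by
  have cv := cover hd
  have hd' : b ≠ a ∧ b ≠ c ∧ a ≠ c ∧ b ≠ 3 ∧ a ≠ 3 ∧ c ≠ 3 := by tauto
  have im : ∀ i j q, R i j q → q = c ∨ q = 3 := by
    intro i j q h
    rcases cv q with rfl | rfl | rfl | rfl <;> first | tauto | exact absurd h (ha _ _) | exact absurd h (hb _ _)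
  have c3 : ∀ i j q, R i j q → i ≠ 3 ∧ j ≠ 3 := fun i j q h =>
    ⟨fun e => cent _ _ (e ▸ h), fun e => cent _ _ (e ▸ sym _ _ _ h)⟩
  have cq : ∀ j q, R c j q → q = 3 := by
    intro j q h
    rcases im _ _ _ h with rfl | rfl
    · exact absurd (sym _ _ _ h) (acyc _ _)
    · rfl
  have cc : ∀ q, ¬ R c c q := by
    intro q h
    obtain ⟨i, j, hij⟩ := hc
    rcases jac _ _ _ _ _ hij h with ⟨j', h1, h2⟩ | ⟨j', h1, h2⟩ <;>
    · have := cq _ _ h1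
      subst this
      exact (c3 _ _ _ h2).2 rfl
  -- which pair maps to c
  have toc : R a a c ∨ R a b c ∨ R b b c := by
    obtain ⟨i, j, hij⟩ := hc
    have h3 := c3 _ _ _ hij
    rcases cv i with rfl | rfl | rfl | rfl
    · rcases cv j with rfl | rfl | rfl | rfl
      · tauto
      · tauto
      · exact absurd hij (acyc _ _)
      · tauto
    · rcases cv j with rfl | rfl | rfl | rfl
      · have := sym _ _ _ hij; tauto
      · tauto
      · exact absurd hij (acyc _ _)
      · tauto
    · exact absurd (sym _ _ _ hij) (acyc _ _)
    · tauto
  -- all nonzero brackets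
  have all : ∀ P : Fin 4 → Fin 4 → Fin 4 → Prop, (∀ i j q, P i j q → P j i q) →
      (R a a c → P a a c) → (R a a 3 → P a a 3) → (R a b c → P a b c) → (R a b 3 → P a b 3) →
      (R b b c → P b b c) → (R b b 3 → P b b 3) → (P a c 3) → (R b c 3 → P b c 3) →
      ∀ i j q, R i j q → P i j q := by
    intro P Ps h1 h2 h3 h4 h5 h6 h7 h8 i j q h
    have hi3 := c3 _ _ _ h
    have hq := im _ _ _ h
    have hs := sym _ _ _ h
    rcases cv i with e | e | e | e
    · rcases cv j with e' | e' | e' | e'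
      · subst e e'; rcases hq with rfl | rfl
        · exact h1 h
        · exact h2 h
      · subst e e'; rcases hq with rfl | rfl
        · exact h3 h
        · exact h4 h
      · subst e e'; have := cq _ _ hs; subst this; exact h7
      · exact absurd e' hi3.2
    · rcases cv j with e' | e' | e' | e'
      · subst e e'; apply Ps; rcases hq with rfl | rfl
        · exact h3 hs
        · exact h4 hs
      · subst e e'; rcases hq with rfl | rfl
        · exact h5 h
        · exact h6 h
      · subst e e'; have := cq _ _ hs; subst this; exact h8 h
      · exact absurd e' hi3.2
    · rcases cv j with e' | e' | e' | e'
      · subst e e'; have := cq _ _ h; subst this; exact Ps _ _ _ h7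
      · subst e e'; have := cq _ _ h; subst this; exact Ps _ _ _ (h8 hs)
      · subst e e'; exact absurd h (cc _)
      · exact absurd e' hi3.2
    · exact absurd e hi3.1
  have grade : ∀ wa wb wc wk : ℂ, wa ≠ 0 → (R a a c → wa + wa = wc) → (R a a 3 → wa + wa = wk) →
      (R a b c → wa + wb = wc) → (R a b 3 → wa + wb = wk) →
      (R b b c → wb + wb = wc) → (R b b 3 → wb + wb = wk) → (wa + wc = wk) →
      (R b c 3 → wb + wc = wk) → ∃ a b c, Outcome R a b c := by
    intro wa wb wc wk h0 h1 h2 h3 h4 h5 h6 h7 h8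
    refine ⟨a, b, c, hd, ha, Or.inl (weight_exists hd wa wb wc wk h0 ?_)⟩
    intro w ea eb ec ek
    refine all (fun i j q => w i + w j = w q) (fun i j q h => by rw [add_comm]; exact h)
      ?_ ?_ ?_ ?_ ?_ ?_ ?_ ?_ <;> simp only [ea, eb, ec, ek] <;> assumption
  have f1 : R a a c → ¬ R a a 3 := fun h h' => hd.2.2.2.2.2 (func _ _ _ _ h h')
  have f2 : R a b c → ¬ R a b 3 := fun h h' => hd.2.2.2.2.2 (func _ _ _ _ h h')
  have f3 : R b b c → ¬ R b b 3 := fun h h' => hd.2.2.2.2.2 (func _ _ _ _ h h')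
  by_cases hbc : R b c 3
  · -- case I
    have hab : R a b c := by
      have key : ∀ x y, R y c 3 → R x x c → R y x c := by
        intro x y hy hx
        have : ∃ j', R y x j' ∧ R x j' 3 := by
          rcases jac _ _ _ _ _ hx hy with h | h <;> exact h
        obtain ⟨j', h1, h2⟩ := this
        rcases im _ _ _ h1 with rfl | rfl
        · exact h1
        · exact absurd rfl (c3 _ _ _ h2).2
      rcases toc with h | h | h
      · exact sym _ _ _ (key a b hbc h)
      · exact h
      · exact key b a hac h
    by_cases hbb : R b b 3
    · exact ⟨a, b, c, hd, ha, Or.inr ⟨hb, hbb, hac, Or.inl ⟨hab, hbc⟩⟩⟩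
    · by_cases haa : R a a 3
      · exact ⟨b, a, c, hd', hb, Or.inr ⟨ha, haa, hbc, Or.inl ⟨sym _ _ _ hab, hac⟩⟩⟩
      · refine grade 1 1 2 3 (by norm_num) ?_ ?_ ?_ ?_ ?_ ?_ (by norm_num) ?_ <;> intro hh <;>
          first | (norm_num; done) | exact absurd hh (by assumption) | (exfalso; clear grade all; first | exact hbbc hh | exact f1 ‹_› hh | exact f2 ‹_› hh | exact h2 (Or.inl hh) | exact h2 (Or.inr hh) | exact f1 hh ‹_›)
  · have hbcn : ∀ q, ¬ R b c q := by
      intro q h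
      have := cq _ _ (sym _ _ _ h)
      subst this
      exact hbc h
    have hbbc : ¬ R b b c := by
      intro h
      have : ∃ j', R a b j' ∧ R b j' 3 := by
        rcases jac _ _ _ _ _ h hac with h | h <;> exact h
      obtain ⟨j', h1, h2⟩ := this
      rcases im _ _ _ h1 with rfl | rfl
      · exact hbc h2
      · exact absurd rfl (c3 _ _ _ h2).2
    by_cases hbb : R b b 3
    · by_cases h1 : R a b c
      · by_cases h2 : R a a c ∨ R a a 3
        · exact ⟨a, b, c, hd, ha, Or.inr ⟨hb, hbb, hac, Or.inr (Or.inl ⟨h1, hbcn, h2⟩)⟩⟩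
        · refine grade 1 2 3 4 (by norm_num) ?_ ?_ ?_ ?_ ?_ ?_ (by norm_num) ?_ <;> intro hh <;>
          first | (norm_num; done) | exact absurd hh (by assumption) | (exfalso; clear grade all; first | exact hbbc hh | exact f1 ‹_› hh | exact f2 ‹_› hh | exact h2 (Or.inl hh) | exact h2 (Or.inr hh) | exact f1 hh ‹_›)
      · have h2 : R a a c := by tauto
        by_cases h3 : R a b 3
        · exact ⟨a, b, c, hd, ha, Or.inr ⟨hb, hbb, hac, Or.inr (Or.inr ⟨h2, h3⟩)⟩⟩
        · refine grade 2 3 4 6 (by norm_num) ?_ ?_ ?_ ?_ ?_ ?_ (by norm_num) ?_ <;> intro hh <;>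
          first | (norm_num; done) | exact absurd hh (by assumption) | (exfalso; clear grade all; first | exact hbbc hh | exact f1 ‹_› hh | exact f2 ‹_› hh | exact h2 (Or.inl hh) | exact h2 (Or.inr hh) | exact f1 hh ‹_›)
    · by_cases h1 : R a b c
      · by_cases h2 : R a a 3
        · refine grade 1 0 1 2 (by norm_num) ?_ ?_ ?_ ?_ ?_ ?_ (by norm_num) ?_ <;> intro hh <;>
          first | (norm_num; done) | exact absurd hh (by assumption) | (exfalso; clear grade all; first | exact hbbc hh | exact f1 ‹_› hh | exact f2 ‹_› hh | exact h2 (Or.inl hh) | exact h2 (Or.inr hh) | exact f1 hh ‹_›)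
        · refine grade 1 1 2 3 (by norm_num) ?_ ?_ ?_ ?_ ?_ ?_ (by norm_num) ?_ <;> intro hh <;>
          first | (norm_num; done) | exact absurd hh (by assumption) | (exfalso; clear grade all; first | exact hbbc hh | exact f1 ‹_› hh | exact f2 ‹_› hh | exact h2 (Or.inl hh) | exact h2 (Or.inr hh) | exact f1 hh ‹_›)
      · have h2 : R a a c := by tauto
        refine grade 1 2 2 3 (by norm_num) ?_ ?_ ?_ ?_ ?_ ?_ (by norm_num) ?_ <;> intro hh <;>
          first | (norm_num; done) | exact absurd hh (by assumption) | (exfalso; clear grade all; first | exact hbbc hh | exact f1 ‹_› hh | exact f2 ‹_› hh | exact h2 (Or.inl hh) | exact h2 (Or.inr hh) | exact f1 hh ‹_›)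

theorem two_gen
    (sym : ∀ i j q, R i j q → R j i q)
    (func : ∀ i j q q', R i j q → R i j q' → q = q')
    (cent : ∀ j q, ¬ R 3 j q)
    (nonc : ∀ i, i ≠ 3 → ∃ j q, R i j q)
    (acyc : ∀ i j, ¬ R i j j)
    (jac : ∀ l m j i q, R l m j → R i j q →
    (∃ j', R i m j' ∧ R l j' q) ∨ (∃ j', R i l j' ∧ R m j' q))
    {a b c : Fin 4}
    (hd : a ≠ b ∧ a ≠ c ∧ b ≠ c ∧ a ≠ 3 ∧ b ≠ 3 ∧ c ≠ 3)
    (ha : ∀ i j, ¬ R i j a) (hb : ∀ i j, ¬ R i j b) (hc : ∃ i j, R i j c) :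
    ∃ a b c, Outcome R a b c := by
  have cv := cover hd
  have hd' : b ≠ a ∧ b ≠ c ∧ a ≠ c ∧ b ≠ 3 ∧ a ≠ 3 ∧ c ≠ 3 := by tauto
  obtain ⟨j, q, h⟩ := nonc c (by tauto)
  have hq : q = 3 := by
    rcases cv q with rfl | rfl | rfl | rfl
    · exact absurd h (ha _ _)
    · exact absurd h (hb _ _)
    · exact absurd (sym _ _ _ h) (acyc _ _)
    · rfl
  subst hq
  rcases cv j with rfl | rfl | rfl | rfl
  · exact two_gen_aux sym func cent acyc jac hd ha hb hc (sym _ _ _ h)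
  · exact two_gen_aux sym func cent acyc jac hd' hb ha hc (sym _ _ _ h)
  · exfalso
    obtain ⟨i, k, hij⟩ := hc
    have key : ∀ i j', R j i j' → ∀ l, ¬ R l j' 3 := by
      intro i j' h1 l h2
      rcases cv j' with rfl | rfl | rfl | rfl
      · exact ha _ _ h1
      · exact hb _ _ h1
      · exact acyc _ _ (sym _ _ _ h1)
      · exact cent _ _ (sym _ _ _ h2)
    rcases jac _ _ _ _ _ hij h with ⟨j', h1, h2⟩ | ⟨j', h1, h2⟩ <;> exact key _ _ h1 _ h2
  · exact absurd (sym _ _ _ h) (cent _ _)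

theorem one_gen
    (sym : ∀ i j q, R i j q → R j i q)
    (func : ∀ i j q q', R i j q → R i j q' → q = q')
    (cent : ∀ j q, ¬ R 3 j q)
    (acyc : ∀ i j, ¬ R i j j)
    (jac : ∀ l m j i q, R l m j → R i j q →
    (∃ j', R i m j' ∧ R l j' q) ∨ (∃ j', R i l j' ∧ R m j' q))
    {a b c : Fin 4}
    (hd : a ≠ b ∧ a ≠ c ∧ b ≠ c ∧ a ≠ 3 ∧ b ≠ 3 ∧ c ≠ 3)
    (ha : ∀ i j, ¬ R i j a) (hc : ∃ i j, R i j c)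
    (haa : R a a b) (hbo : ∀ i j, R i j b → j = a) :
    ∃ a b c, Outcome R a b c := by
  have cv := cover hd
  have c3 : ∀ i j q, R i j q → i ≠ 3 ∧ j ≠ 3 := fun i j q h =>
    ⟨fun e => cent _ _ (e ▸ h), fun e => cent _ _ (e ▸ sym _ _ _ h)⟩
  have cq : ∀ j q, R c j q → q = 3 := by
    intro j q h
    rcases cv q with e | e | e | e
    · subst e; exact absurd h (ha _ _)
    · subst e; exact absurd (hbo _ _ (sym _ _ _ h)).symm hd.2.1
    · subst e; exact absurd (sym _ _ _ h) (acyc _ _)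
    · exact e
  have hbb : ∀ q, R b b q → q = 3 := by
    intro q h
    rcases cv q with e | e | e | e
    · subst e; exact absurd h (ha _ _)
    · subst e; exact absurd h (acyc _ _)
    · subst e
      have : ∃ j', R b a j' ∧ R a j' q := by
        rcases jac _ _ _ _ _ haa h with h | h <;> exact h
      obtain ⟨j', h1, h2⟩ := this
      rcases cv j' with e | e | e | e
      · subst e; exact absurd h1 (ha _ _)
      · subst e; exact absurd (sym _ _ _ h1) (acyc _ _)
      · subst e; exact absurd h2 (acyc _ _)
      · subst e; exact absurd (sym _ _ _ h2) (cent _ _)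
    · exact e
  have hbc : ∀ q, ¬ R b c q := by
    intro q h
    have : ∃ j', R c a j' ∧ R a j' q := by
      rcases jac _ _ _ _ _ haa (sym _ _ _ h) with h | h <;> exact h
    obtain ⟨j', h1, h2⟩ := this
    have := cq _ _ h1
    subst this
    exact absurd (sym _ _ _ h2) (cent _ _)
  have hab : R a b c := by
    obtain ⟨i, j, h⟩ := hc
    have h3 := c3 _ _ _ h
    have hi : i ≠ c := by rintro rfl; exact acyc _ _ (sym _ _ _ h)
    have hj : j ≠ c := by rintro rfl; exact acyc _ _ h
    rcases cv i with e | e | e | e <;> rcases cv j with e' | e' | e' | e' <;> try tauto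
    · subst e e'; exact absurd (func _ _ _ _ haa h) hd.2.2.1
    · subst e e'; exact h
    · subst e e'; exact sym _ _ _ h
    · subst e e'; exact absurd (hbb _ h) hd.2.2.2.2.2
  have hcc : ∀ q, ¬ R c c q := by
    intro q h
    rcases jac _ _ _ _ _ hab h with ⟨j', h1, h2⟩ | ⟨j', h1, h2⟩ <;>
    · have := cq _ _ h1
      subst this
      exact absurd (sym _ _ _ h2) (cent _ _)
  refine ⟨a, b, c, hd, ha, Or.inl (weight_exists hd 1 2 3 4 one_ne_zero ?_)⟩
  intro w ea eb ec ek i j q h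
  have h3 := c3 _ _ _ h
  rcases cv i with e | e | e | e <;> rcases cv j with e' | e' | e' | e' <;> try tauto
  · subst e e'; rw [← func _ _ _ _ haa h, ea, eb]; norm_num
  · subst e e'; rw [← func _ _ _ _ hab h, ea, eb, ec]; norm_num
  · subst e e'; rw [cq _ _ (sym _ _ _ h), ea, ec, ek]; norm_num
  · subst e e'; rw [← func _ _ _ _ hab (sym _ _ _ h), ea, eb, ec]; norm_num
  · subst e e'; rw [hbb _ h, eb, ek]; norm_num
  · subst e e'; exact absurd h (hbc _)
  · subst e e'; rw [cq _ _ h, ea, ec, ek]; norm_num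
  · subst e e'; exact absurd (sym _ _ _ h) (hbc _)
  · subst e e'; exact absurd h (hcc _)

theorem comb
    (sym : ∀ i j q, R i j q → R j i q)
    (func : ∀ i j q q', R i j q → R i j q' → q = q')
    (cent : ∀ j q, ¬ R 3 j q)
    (nonc : ∀ i, i ≠ 3 → ∃ j q, R i j q)
    (jac : ∀ l m j i q, R l m j → R i j q →
    (∃ j', R i m j' ∧ R l j' q) ∨ (∃ j', R i l j' ∧ R m j' q))
    (nak : ∀ S : Fin 4 → Prop, (∃ i, S i) → (∀ i j q, S j → R i j q → S q) →
      ∃ j, S j ∧ ∀ i j', S j' → ¬ R i j' j) :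
    ∃ a b c, Outcome R a b c := by
  let r : Fin 4 → Fin 4 → Prop := fun j q => ∃ i, R i j q
  have acy : ∀ j, ¬ Relation.TransGen r j j := by
    intro j hj
    obtain ⟨q, hq, hq'⟩ := nak (fun q => Relation.TransGen r j q) ⟨j, hj⟩
      (fun i p q hp h => hp.tail ⟨i, h⟩)
    rcases Relation.TransGen.tail'_iff.1 hq with ⟨p, hp, i, hi⟩
    rcases Relation.reflTransGen_iff_eq_or_transGen.1 hp with e | hp
    · subst e; exact hq' _ _ hj hi
    · exact hq' _ _ hp hi
  have acyc : ∀ i j, ¬ R i j j := fun i j h => acy j (.single ⟨i, h⟩)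
  have has3 : ∀ S : Fin 4 → Prop, (∃ i, S i) → (∀ i j q, S j → R i j q → S q) → S 3 := by
    intro S hS hcl
    by_contra h3
    let lt : Fin 4 → Fin 4 → Prop := fun x y => Relation.TransGen r y x
    have : IsTrans (Fin 4) lt := ⟨fun x y z h1 h2 => Relation.TransGen.trans h2 h1⟩
    have : Std.Irrefl lt := ⟨fun x h => acy x h⟩
    have wf : WellFounded lt := Finite.wellFounded_of_trans_of_irrefl lt
    obtain ⟨m, hm, hm'⟩ := wf.has_min {i | S i} hS
    obtain ⟨j, q, h⟩ := nonc m (fun e => h3 (e ▸ hm))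
    exact hm' q (hcl _ _ _ hm (sym _ _ _ h)) (.single ⟨j, sym _ _ _ h⟩)
  have him3 : ∃ i j, R i j 3 := by
    obtain ⟨j, q, h⟩ := nonc 0 (by decide)
    exact has3 (fun q => ∃ i j, R i j q) ⟨q, 0, j, h⟩ (fun i j q _ h => ⟨i, j, h⟩)
  obtain ⟨a, -, ha⟩ := nak (fun _ => True) ⟨0, trivial⟩ (fun _ _ _ _ _ => trivial)
  have ha : ∀ i j, ¬ R i j a := fun i j => ha i j trivial
  have ha3 : a ≠ 3 := by
    rintro rfl
    obtain ⟨i, j, h⟩ := him3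
    exact ha _ _ h
  obtain ⟨b, c, hd⟩ : ∃ b c : Fin 4, a ≠ b ∧ a ≠ c ∧ b ≠ c ∧ a ≠ 3 ∧ b ≠ 3 ∧ c ≠ 3 := by
    clear * - ha3
    revert a; decide
  have cv := cover hd
  have hd' : a ≠ c ∧ a ≠ b ∧ c ≠ b ∧ a ≠ 3 ∧ c ≠ 3 ∧ b ≠ 3 := by tauto
  by_cases hb : ∃ i j, R i j b
  · by_cases hc : ∃ i j, R i j c
    · obtain ⟨j, hj, hj'⟩ := nak (fun q => ∃ i j, R i j q) ⟨b, hb⟩ (fun i j q _ h => ⟨i, j, h⟩)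
      have hjo : ∀ i k, R i k j → k = a := by
        intro i k h
        have := hj' i k
        by_contra hk
        rcases cv k with e | e | e | e
        · exact hk e
        · subst e; exact this hb h
        · subst e; exact this hc h
        · subst e; exact this him3 h
      have haa : R a a j := by
        obtain ⟨i, k, h⟩ := hj
        have e1 := hjo _ _ h
        have e2 := hjo _ _ (sym _ _ _ h)
        subst e1 e2
        exact h
      rcases cv j with e | e | e | e
      · subst e; exact absurd haa (ha _ _)
      · subst e; exact one_gen sym func cent acyc jac hd ha hc haa hjo
      · subst e; exact one_gen sym func cent acyc jac hd' ha hb haa hjo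
      · subst e
        exfalso
        obtain ⟨k, q, h⟩ := nonc b hd.2.2.2.2.1
        obtain ⟨i, p, hp, h'⟩ := has3 (fun q => ∃ i p, (∃ i' j', R i' j' p) ∧ R i p q)
          ⟨q, k, b, hb, sym _ _ _ h⟩ (by
            rintro i j q ⟨i', p, hp, h1⟩ h2
            exact ⟨i, j, ⟨_, _, h1⟩, h2⟩)
        exact hj' _ _ hp h'
    · exact two_gen sym func cent nonc acyc jac hd' ha (by simpa using hc) hb
  · by_cases hc : ∃ i j, R i j c
    · exact two_gen sym func cent nonc acyc jac hd ha (by simpa using hb) hc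
    · refine ⟨a, b, c, hd, ha, Or.inl (weight_exists hd 1 1 1 2 one_ne_zero ?_)⟩
      intro w ea eb ec ek i j q h
      have hq : q = 3 := by
        rcases cv q with e | e | e | e
        · subst e; exact absurd h (ha _ _)
        · subst e; exact absurd ⟨_, _, h⟩ hb
        · subst e; exact absurd ⟨_, _, h⟩ hc
        · exact e
      subst hq
      have hw : ∀ i j, R i j 3 → w i = 1 := by
        intro i j h
        rcases cv i with e | e | e | e
        · rw [e, ea]
        · rw [e, eb]
        · rw [e, ec]
        · subst e; exact absurd h (cent _ _)
      rw [hw _ _ h, hw _ _ (sym _ _ _ h), ek]; norm_num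
end
end Symp18

namespace Symp18

/-- Coefficients of `⁅x 0, y j⁆`. -/
def gam (n m r : ℕ) : ℕ → ℚ
  | 0 => if r = 0 then 1 else 0
  | j + 1 => if j + 1 < r then 0 else if j + 1 = r then 1 else
      (((j : ℚ) + 1) * ((m : ℚ) - j)) / (((j : ℚ) + 1 - r) * ((n : ℚ) + m - r - j)) * gam n m r j

/-- Coefficients of the equivariant bracket in the bases `f ^ i v`. -/
def TT (n m r : ℕ) : ℕ → ℕ → ℚ
  | 0, j => gam n m r j
  | i + 1, j => TT n m r i j - TT n m r i (j + 1)

theorem gam_lt (n m r j : ℕ) (h : j < r) : gam n m r j = 0 := by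
  cases j with
  | zero => simp [gam]; omega
  | succ j => simp [gam, h]

theorem gam_eq (n m r : ℕ) : gam n m r r = 1 := by
  cases r <;> simp [gam]

theorem TT_lt (n m r i j : ℕ) (h : i + j < r) : TT n m r i j = 0 := by
  induction i generalizing j with
  | zero => simpa [TT] using gam_lt n m r j (by omega)
  | succ i ih => rw [TT, ih j (by omega), ih (j + 1) (by omega), sub_zero]

theorem TT_eq (n m r i j : ℕ) (h : i + j = r) : TT n m r i j = (-1) ^ i := by
  induction i generalizing j with
  | zero => obtain rfl : j = r := by omega
            simpa [TT] using gam_eq n m j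
  | succ i ih => rw [TT, TT_lt _ _ _ _ _ (by omega), ih (j + 1) (by omega), pow_succ]; ring

/-- A standard basis `f ^ i v` of an irreducible module inside `g`. -/
structure StdSeq {g : Type*} [LieRing g] [LieAlgebra ℂ g] (e f h : g) (n : ℕ) (v : ℕ → g) :
    Prop where
  lie_f : ∀ i, ⁅f, v i⁆ = v (i + 1)
  lie_h : ∀ i, ⁅h, v i⁆ = ((n : ℂ) - 2 * i) • v i
  lie_e0 : ⁅e, v 0⁆ = 0
  lie_e : ∀ i, ⁅e, v (i + 1)⁆ = (((i : ℂ) + 1) * ((n : ℂ) - i)) • v i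
  ne : ∀ i, i ≤ n → v i ≠ 0
  zero : ∀ i, n < i → v i = 0

section
variable {g : Type*} [LieRing g] [LieAlgebra ℂ g] {e f h : g}

theorem StdSeq.linInd {n : ℕ} {v : ℕ → g} (s : StdSeq e f h n v) :
    LinearIndependent ℂ (fun i : Fin (n + 1) => v i) := by
  refine Module.End.eigenvectors_linearIndependent' (LieAlgebra.ad ℂ g h)
    (fun i : Fin (n + 1) => (n : ℂ) - 2 * (i : ℕ)) ?_ _ ?_
  · intro i j hij
    have : (2 : ℂ) * (i : ℕ) = 2 * (j : ℕ) := by simpa using hij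
    have := mul_left_cancel₀ two_ne_zero this
    exact Fin.ext (by exact_mod_cast this)
  · intro i
    refine Module.End.hasEigenvector_iff.2 ⟨?_, s.ne i (by omega)⟩
    rw [Module.End.mem_eigenspace_iff, LieAlgebra.ad_apply, s.lie_h]

theorem StdSeq.span_eq {n : ℕ} {v : ℕ → g} (s : StdSeq e f h n v) :
    Submodule.span ℂ (Set.range v) = Submodule.span ℂ (Set.range (fun i : Fin (n + 1) => v i)) := by
  apply le_antisymm
  · rw [Submodule.span_le]
    rintro _ ⟨i, rfl⟩
    by_cases hi : i ≤ n
    · exact Submodule.subset_span ⟨⟨i, by omega⟩, rfl⟩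
    · rw [s.zero i (by omega)]; exact zero_mem _
  · apply Submodule.span_mono
    rintro _ ⟨i, rfl⟩
    exact ⟨i, rfl⟩

theorem StdSeq.finrank {n : ℕ} {v : ℕ → g} (s : StdSeq e f h n v) :
    Module.finrank ℂ (Submodule.span ℂ (Set.range v)) = n + 1 := by
  rw [s.span_eq, finrank_span_eq_card s.linInd]; simp

theorem StdSeq.weight {n : ℕ} {v : ℕ → g} (s : StdSeq e f h n v) {w : g} {μ : ℂ}
    (hw : w ∈ Submodule.span ℂ (Set.range v)) (hμ : ⁅h, w⁆ = μ • w) (h0 : w ≠ 0) :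
    ∃ t ≤ n, μ = (n : ℂ) - 2 * t ∧ ∃ α : ℂ, w = α • v t := by
  rw [s.span_eq, Submodule.mem_span_range_iff_exists_fun] at hw
  obtain ⟨a, rfl⟩ := hw
  have key : ∀ i, a i * ((n : ℂ) - 2 * (i : ℕ)) - μ * a i = 0 := by
    refine Fintype.linearIndependent_iff.1 s.linInd _ ?_
    rw [lie_sum, Finset.smul_sum] at hμ
    rw [← sub_eq_zero, ← Finset.sum_sub_distrib] at hμ
    rw [← hμ]
    refine Finset.sum_congr rfl fun i _ => ?_
    rw [lie_smul, s.lie_h, smul_smul, smul_smul, sub_smul]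
  obtain ⟨t, ht⟩ : ∃ t, a t ≠ 0 := by
    by_contra hh
    push Not at hh
    exact h0 (by simp [hh])
  have hμt : μ = (n : ℂ) - 2 * (t : ℕ) := by
    have := key t
    have h2 : a t * (((n : ℂ) - 2 * (t : ℕ)) - μ) = 0 := by linear_combination this
    rcases mul_eq_zero.1 h2 with h3 | h3
    · exact absurd h3 ht
    · linear_combination -h3
  refine ⟨t, by omega, hμt, a t, ?_⟩
  rw [Finset.sum_eq_single t]
  · intro i _ hi
    have := key i
    have h2 : a i * ((t : ℕ) - (i : ℕ) : ℂ) = 0 := by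
      rw [hμt] at this; linear_combination (1 / 2) * this
    rcases mul_eq_zero.1 h2 with h3 | h3
    · simp [h3]
    · exact absurd (Fin.ext (by exact_mod_cast (sub_eq_zero.1 h3).symm)) hi
  · simp

theorem bracket_formula {n m p : ℕ} {x y u : ℕ → g} (sx : StdSeq e f h n x)
    (sy : StdSeq e f h m y) (su : StdSeq e f h p u)
    (hin : ∀ i j, ⁅x i, y j⁆ ∈ Submodule.span ℂ (Set.range u)) (hne : ∃ i j, ⁅x i, y j⁆ ≠ 0) :
    ∃ (r : ℕ) (c : ℂ), n + m = p + 2 * r ∧ r ≤ n ∧ r ≤ m ∧ c ≠ 0 ∧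
      ∀ i j, ⁅x i, y j⁆ = (c * (TT n m r i j : ℂ)) • u (i + j - r) := by
  have step : ∀ i j, ⁅x (i + 1), y j⁆ = ⁅f, ⁅x i, y j⁆⁆ - ⁅x i, y (j + 1)⁆ := by
    intro i j
    rw [leibniz_lie, sx.lie_f, sy.lie_f]; abel
  have hw : ∀ j, ⁅h, ⁅x 0, y j⁆⁆ = ((n : ℂ) + m - 2 * j) • ⁅x 0, y j⁆ := by
    intro j
    rw [leibniz_lie, sx.lie_h, sy.lie_h, smul_lie, lie_smul, ← add_smul]
    congr 1; push_cast; ring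
  have he : ∀ j, ⁅e, ⁅x 0, y (j + 1)⁆⁆ = (((j : ℂ) + 1) * ((m : ℂ) - j)) • ⁅x 0, y j⁆ := by
    intro j
    rw [leibniz_lie, sx.lie_e0, sy.lie_e, zero_lie, lie_smul, zero_add]
  have he0 : ⁅e, ⁅x 0, y 0⁆⁆ = 0 := by
    rw [leibniz_lie, sx.lie_e0, sy.lie_e0, zero_lie, lie_zero, zero_add]
  have hex : ∃ j, ⁅x 0, y j⁆ ≠ 0 := by
    by_contra hh
    push Not at hh
    obtain ⟨i, j, hij⟩ := hne
    apply hij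
    clear hij
    induction i generalizing j with
    | zero => exact hh j
    | succ i ih => rw [step, ih, ih]; simp
  classical
  let r := Nat.find hex
  have hr : ⁅x 0, y r⁆ ≠ 0 := Nat.find_spec hex
  have hrlt : ∀ j < r, ⁅x 0, y j⁆ = 0 := fun j hj => not_not.1 (Nat.find_min hex hj)
  obtain ⟨t, htp, hμ, c, hc⟩ := su.weight (hin 0 r) (hw r) hr
  have her : ⁅e, ⁅x 0, y r⁆⁆ = 0 := by
    cases hh : r with
    | zero => exact he0
    | succ k => rw [he, hrlt k (by omega), smul_zero]
  have hc0 : c ≠ 0 := by rintro rfl; exact hr (by simp [hc])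
  have ht0 : t = 0 := by
    cases t with
    | zero => rfl
    | succ t =>
      exfalso
      rw [hc, lie_smul, su.lie_e, smul_smul] at her
      have h1 := su.ne t (by omega)
      have h2 : ((t : ℂ) + 1) ≠ 0 := by exact_mod_cast Nat.succ_ne_zero t
      have h3 : ((p : ℂ) - t) ≠ 0 := by
        rw [sub_ne_zero]; exact_mod_cast (by omega : p ≠ t)
      exact (smul_ne_zero (mul_ne_zero hc0 (mul_ne_zero h2 h3)) h1) her
  subst ht0
  have hsum : n + m = p + 2 * r := by
    have : (n : ℂ) + m = p + 2 * r := by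
      have := hμ; push_cast at this; linear_combination this
    exact_mod_cast this
  have hsumC : (n : ℂ) + m = p + 2 * r := by exact_mod_cast hsum
  have hrm : r ≤ m := by
    by_contra hh
    exact hr (by rw [sy.zero r (by omega), lie_zero])
  have h0 : ∀ j, ⁅x 0, y j⁆ = (c * (gam n m r j : ℂ)) • u (j - r) := by
    intro j
    by_cases hj : j < r
    · rw [hrlt j hj, gam_lt _ _ _ _ hj]; simp
    · obtain ⟨t, rfl⟩ : ∃ t, j = r + t := ⟨j - r, by omega⟩
      clear hj
      induction t with
      | zero => rw [add_zero, gam_eq, hc]; simp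
      | succ t ih =>
        obtain ⟨α, hα⟩ : ∃ α : ℂ, ⁅x 0, y (r + (t + 1))⁆ = α • u (t + 1) := by
          by_cases hz : ⁅x 0, y (r + (t + 1))⁆ = 0
          · exact ⟨0, by simp [hz]⟩
          · obtain ⟨t', _, hμ', α, hα⟩ := su.weight (hin 0 _) (hw _) hz
            have : ((t' : ℂ)) = ((t + 1 : ℕ) : ℂ) := by
              push_cast at hμ' ⊢
              linear_combination (1 / 2) * hμ' - (1 / 2) * hsumC
            have : t' = t + 1 := by exact_mod_cast this
            exact ⟨α, this ▸ hα⟩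
        by_cases htp : t < p
        · have h1 := he (r + t)
          rw [show r + t + 1 = r + (t + 1) by ring, hα, lie_smul, su.lie_e, ih, smul_smul, smul_smul,
            show r + t - r = t by omega] at h1
          have h2 := smul_left_injective ℂ (su.ne t (by omega)) h1
          have h3 : ((t : ℂ) + 1) ≠ 0 := by exact_mod_cast Nat.succ_ne_zero t
          have h4 : ((p : ℂ) - t) ≠ 0 := by
            rw [sub_ne_zero]; exact_mod_cast (by omega : p ≠ t)
          rw [hα, show r + (t + 1) - r = t + 1 by omega]
          congr 1
          have e1 : gam n m r (r + (t + 1)) = (((r : ℚ) + t + 1) * ((m : ℚ) - (r + t))) /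
              (((t : ℚ) + 1) * ((p : ℚ) - t)) * gam n m r (r + t) := by
            have hs : (n : ℚ) + m = p + 2 * r := by exact_mod_cast hsum
            rw [← add_assoc, gam, if_neg (by omega), if_neg (by omega)]
            push_cast
            congr 2
            have : (n : ℚ) + m - r - (r + t) = p - t := by linear_combination hs
            rw [this]; ring
          rw [e1]
          push_cast at h2 ⊢
          field_simp
          linear_combination h2
        · rw [hα, show r + (t + 1) - r = t + 1 by omega, su.zero (t + 1) (by omega)]; simp
  have hall : ∀ i j, ⁅x i, y j⁆ = (c * (TT n m r i j : ℂ)) • u (i + j - r) := by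
    intro i
    induction i with
    | zero => intro j; rw [h0 j, TT, zero_add]
    | succ i ih =>
      intro j
      rw [step, ih, ih, TT, lie_smul, su.lie_f]
      by_cases hij : i + j < r
      · rw [TT_lt _ _ _ _ _ hij, show i + (j + 1) - r = i + 1 + j - r by omega]
        push_cast
        rw [mul_zero, zero_smul, zero_sub, zero_sub, mul_neg, neg_smul]
      · rw [show i + j - r + 1 = i + 1 + j - r by omega,
          show i + (j + 1) - r = i + 1 + j - r by omega, ← sub_smul]
        push_cast
        congr 1; ring
  refine ⟨r, c, hsum, ?_, hrm, hc0, hall⟩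
  by_contra hh
  have h1 := hall (n + 1) (r - (n + 1))
  rw [sx.zero (n + 1) (by omega), zero_lie, TT_eq _ _ _ _ _ (by omega),
    show n + 1 + (r - (n + 1)) - r = 0 by omega] at h1
  refine smul_ne_zero (mul_ne_zero hc0 ?_) (su.ne 0 (by omega)) h1.symm
  push_cast
  exact pow_ne_zero _ (by norm_num)

theorem bracket_odd {n p r : ℕ} {c : ℂ} {x u : ℕ → g}
    (su : StdSeq e f h p u) (hc : c ≠ 0)
    (hall : ∀ i j, ⁅x i, x j⁆ = (c * (TT n n r i j : ℂ)) • u (i + j - r)) : r % 2 = 1 := by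
  by_contra hh
  have hev : Even r := Nat.even_iff.2 (by omega)
  have h1 := hall 0 r
  have h2 := hall r 0
  rw [TT_eq _ _ _ _ _ (by omega)] at h1 h2
  rw [← lie_skew, h2] at h1
  simp only [hev.neg_one_pow, add_zero, zero_add, Nat.sub_self, pow_zero] at h1
  have h3 : (c * ((1 : ℚ) : ℂ)) • u 0 = 0 := by
    generalize (c * ((1 : ℚ) : ℂ)) • u 0 = z at h1
    have h4 : (2 : ℂ) • z = 0 := by
      rw [two_smul]; nth_rewrite 1 [← h1]; simp
    exact (smul_eq_zero.1 h4).resolve_left two_ne_zero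
  exact smul_ne_zero (by simpa using hc) (su.ne 0 (by omega)) h3

end
end Symp18

namespace Symp18
open Matrix in
theorem sl2_triple {g : Type*} [LieRing g] [LieAlgebra ℂ g]  [FiniteDimensional ℂ g] (s : LieSubalgebra ℂ g)
    (φ : s ≃ₗ⁅ℂ⁆ LieAlgebra.SpecialLinear.sl (Fin 2) ℂ) :
    ∃ e f h : s, IsSl2Triple h e f ∧ (∀ x : s, ∃ a b c : ℂ, x = a • e + b • f + c • h) ∧
      3 ≤ Module.finrank ℂ s := by
  have hE : (!![0, 1; 0, 0] : Matrix (Fin 2) (Fin 2) ℂ) ∈ LieAlgebra.SpecialLinear.sl (Fin 2) ℂ := by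
    show Matrix.trace (!![0, 1; 0, 0] : Matrix (Fin 2) (Fin 2) ℂ) = 0; simp
  have hF : (!![0, 0; 1, 0] : Matrix (Fin 2) (Fin 2) ℂ) ∈ LieAlgebra.SpecialLinear.sl (Fin 2) ℂ := by
    show Matrix.trace (!![0, 0; 1, 0] : Matrix (Fin 2) (Fin 2) ℂ) = 0; simp
  have hH : (!![1, 0; 0, -1] : Matrix (Fin 2) (Fin 2) ℂ) ∈ LieAlgebra.SpecialLinear.sl (Fin 2) ℂ := by
    show Matrix.trace (!![1, 0; 0, -1] : Matrix (Fin 2) (Fin 2) ℂ) = 0; simp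
  set E : LieAlgebra.SpecialLinear.sl (Fin 2) ℂ := ⟨_, hE⟩ with hEd
  set F : LieAlgebra.SpecialLinear.sl (Fin 2) ℂ := ⟨_, hF⟩ with hFd
  set H : LieAlgebra.SpecialLinear.sl (Fin 2) ℂ := ⟨_, hH⟩ with hHd
  have rel1 : ⁅E, F⁆ = H := by
    apply Subtype.ext
    rw [LieAlgebra.SpecialLinear.sl_bracket]
    simp only [hEd, hFd, hHd]
    ext i j; fin_cases i <;> fin_cases j <;> simp
  have rel2 : ⁅H, E⁆ = 2 • E := by
    apply Subtype.ext
    rw [LieAlgebra.SpecialLinear.sl_bracket, two_smul]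
    show _ = E.val + E.val
    simp only [hEd, hFd, hHd]
    ext i j; fin_cases i <;> fin_cases j <;> simp
  have rel3 : ⁅H, F⁆ = -(2 • F) := by
    apply Subtype.ext
    rw [LieAlgebra.SpecialLinear.sl_bracket, two_smul]
    show _ = -(F.val + F.val)
    simp only [hEd, hFd, hHd]
    ext i j; fin_cases i <;> fin_cases j <;> simp; norm_num
  have gen : ∀ x : LieAlgebra.SpecialLinear.sl (Fin 2) ℂ, ∃ a b c : ℂ,
      x = a • E + b • F + c • H := by
    rintro ⟨x, hx⟩
    replace hx : Matrix.trace x = 0 := hx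
    rw [Matrix.trace_fin_two] at hx
    refine ⟨x 0 1, x 1 0, x 0 0, Subtype.ext ?_⟩
    show x = x 0 1 • E.val + x 1 0 • F.val + x 0 0 • H.val
    simp only [hEd, hFd, hHd]
    ext i j; fin_cases i <;> fin_cases j <;> simp
    linear_combination hx
  have ind : ∀ a b c : ℂ, a • E + b • F + c • H = 0 → a = 0 ∧ b = 0 ∧ c = 0 := by
    intro a b c h0
    have h1 : a • E.val + b • F.val + c • H.val = 0 := congrArg Subtype.val h0
    simp only [hEd, hFd, hHd] at h1
    have h2 := congrFun (congrFun h1 0) 1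
    have h3 := congrFun (congrFun h1 1) 0
    have h4 := congrFun (congrFun h1 0) 0
    simp at h2 h3 h4
    exact ⟨h2, h3, h4⟩
  refine ⟨φ.symm E, φ.symm F, φ.symm H, ⟨?_, ?_, ?_, ?_⟩, ?_, ?_⟩
  · intro h0
    have h1 : H = 0 := by
      have := congrArg φ h0
      simpa using this
    have := ind 0 0 1 (by simp [h1])
    simp at this
  · rw [← LieEquiv.map_lie, rel1]
  · rw [← LieEquiv.map_lie, rel2, two_smul, two_smul]; exact map_add φ.symm.toLinearEquiv _ _
  · rw [← LieEquiv.map_lie, rel3, two_smul, two_smul]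
    exact (map_neg φ.symm.toLinearEquiv _).trans (congrArg _ (map_add φ.symm.toLinearEquiv _ _))
  · intro x
    obtain ⟨a, b, c, h0⟩ := gen (φ x)
    refine ⟨a, b, c, ?_⟩
    have := congrArg φ.symm.toLinearEquiv h0
    simp only [map_add, map_smul] at this
    rw [← φ.symm_apply_apply x]
    exact this
  · have hli : LinearIndependent ℂ ![E, F, H] := by
      rw [Fintype.linearIndependent_iff]
      intro c hc
      rw [Fin.sum_univ_three] at hc
      obtain ⟨h1, h2, h3⟩ := ind _ _ _ hc
      intro i; fin_cases i <;> assumption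
    have := hli.map' φ.symm.toLinearEquiv.toLinearMap (LinearMap.ker_eq_bot.2 φ.symm.toLinearEquiv.injective)
    simpa using this.fintype_card_le_finrank

theorem exists_stdSeq {g : Type*} [LieRing g] [LieAlgebra ℂ g] [FiniteDimensional ℂ g]
    (s : LieSubalgebra ℂ g) {e f h : s} (t : IsSl2Triple h e f)
    (gen : ∀ x : s, ∃ a b c : ℂ, x = a • e + b • f + c • h) (V : Submodule ℂ g)
    (hV : Symp.IsIrreducibleSMod g s V) :
    ∃ (n : ℕ) (v : ℕ → g), StdSeq (e : g) f h n v ∧ Submodule.span ℂ (Set.range v) = V := by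
  obtain ⟨hne, hinv, hirr⟩ := hV
  let M : LieSubmodule ℂ s g := { V with lie_mem := fun {x m} hm => hinv x x.2 m hm }
  have hnt : Nontrivial M := by
    obtain ⟨x, hx, h0⟩ := (Submodule.ne_bot_iff _).1 hne
    exact ⟨⟨⟨x, hx⟩, 0, fun h => h0 (congrArg Subtype.val h)⟩⟩
  obtain ⟨μ, m, -, P⟩ := IsSl2Triple.exists_hasPrimitiveVectorWith (R := ℂ) (M := M) t
  obtain ⟨n, rfl⟩ := P.exists_nat
  let w : ℕ → M := fun i => ((LieModule.toEnd ℂ s M f) ^ i) m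
  let v : ℕ → g := fun i => (w i : g)
  have hf : ∀ i, ⁅f, w i⁆ = w (i + 1) := fun i => P.lie_f_pow_toEnd_f i
  have hco : ∀ (x : s) (y : M), ⁅(x : g), (y : g)⁆ = ((⁅x, y⁆ : M) : g) := fun x y => rfl
  have hz0 : w (n + 1) = 0 := P.pow_toEnd_f_eq_zero_of_eq_nat rfl
  have hz : ∀ j, w (n + 1 + j) = 0 := by
    intro j
    induction j with
    | zero => exact hz0
    | succ j ih => rw [← add_assoc, ← hf, ih, lie_zero]
  have S : StdSeq (e : g) f h n v := by
    refine ⟨?_, ?_, ?_, ?_, ?_, ?_⟩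
    · intro i; show ⁅(f : g), (w i : g)⁆ = _; rw [hco, hf]
    · intro i; show ⁅(h : g), (w i : g)⁆ = _; rw [hco, P.lie_h_pow_toEnd_f]; rfl
    · show ⁅(e : g), (w 0 : g)⁆ = _; rw [hco]
      have : ⁅e, w 0⁆ = 0 := P.lie_e
      rw [this]; rfl
    · intro i; show ⁅(e : g), (w (i + 1) : g)⁆ = _; rw [hco, P.lie_e_pow_succ_toEnd_f]; rfl
    · intro i hi h0
      exact P.pow_toEnd_f_ne_zero_of_eq_nat rfl hi (Subtype.ext h0)
    · intro i hi
      obtain ⟨j, rfl⟩ := Nat.exists_eq_add_of_lt hi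
      show ((w (n + j + 1)) : g) = 0
      rw [show n + j + 1 = n + 1 + j by ring, hz]; rfl
  refine ⟨n, v, S, ?_⟩
  have hle : Submodule.span ℂ (Set.range v) ≤ V := by
    rw [Submodule.span_le]; rintro _ ⟨i, rfl⟩; exact (w i).2
  have hmem : ∀ i, v i ∈ Submodule.span ℂ (Set.range v) := fun i => Submodule.subset_span ⟨i, rfl⟩
  refine (hirr _ hle ?_).resolve_left ?_
  · intro x hx y hy
    obtain ⟨a, b, c, h0⟩ := gen ⟨x, hx⟩
    have h1 : x = a • (e : g) + b • (f : g) + c • (h : g) := congrArg Subtype.val h0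
    rw [h1]
    induction hy using Submodule.span_induction with
    | zero => simp
    | add u v _ _ hu hv => rw [lie_add]; exact add_mem hu hv
    | smul t u _ hu => rw [lie_smul]; exact Submodule.smul_mem _ _ hu
    | mem u hu =>
      obtain ⟨i, rfl⟩ := hu
      simp only [add_lie, smul_lie]
      refine add_mem (add_mem (Submodule.smul_mem _ _ ?_) (Submodule.smul_mem _ _ ?_)) (Submodule.smul_mem _ _ ?_)
      · cases i with
        | zero => rw [S.lie_e0]; exact zero_mem _
        | succ i => rw [S.lie_e]; exact Submodule.smul_mem _ _ (hmem _)
      · rw [S.lie_f]; exact hmem _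
      · rw [S.lie_h]; exact Submodule.smul_mem _ _ (hmem _)
  · intro h0
    have := hmem 0
    rw [h0, Submodule.mem_bot] at this
    exact S.ne 0 (Nat.zero_le _) this
end Symp18

namespace Symp18

/-- In a perfect Lie algebra a common eigenvector of the radical is killed by it. -/
theorem fixed_vector {g : Type*} [LieRing g] [LieAlgebra ℂ g] [FiniteDimensional ℂ g]
    (hr : ∀ x ∈ LieAlgebra.radical ℂ g, x ∈ Submodule.span ℂ
      {z : g | ∃ y : g, ∃ a ∈ LieAlgebra.radical ℂ g, z = ⁅y, a⁆})
    (M : Type*) [AddCommGroup M] [Module ℂ M] [LieRingModule g M] [LieModule ℂ g M]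
    [FiniteDimensional ℂ M] [Nontrivial M] :
    ∃ m : M, m ≠ 0 ∧ ∀ x ∈ LieAlgebra.radical ℂ g, ⁅x, m⁆ = 0 := by
  obtain ⟨χ, hχ⟩ : ∃ χ : Module.Dual ℂ (LieAlgebra.radical ℂ g),
      Nontrivial (LieModule.weightSpace M χ) :=
    LieModule.exists_nontrivial_weightSpace_of_isSolvable ℂ (LieAlgebra.radical ℂ g) M
  let N : LieSubmodule ℂ g M := LieModule.weightSpaceOfIsLieTower ℂ M χ
  have hN : ∀ m ∈ N, ∀ (y : g) (hy : y ∈ LieAlgebra.radical ℂ g), ⁅y, m⁆ = χ ⟨y, hy⟩ • m := by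
    intro m hm y hy
    exact (LieModule.mem_weightSpace (χ := χ) m).1 hm ⟨y, hy⟩
  obtain ⟨⟨m, hm⟩, h0⟩ := exists_ne (0 : LieModule.weightSpace M χ)
  refine ⟨m, fun h => h0 (Subtype.ext h), ?_⟩
  have hm' : m ∈ N := hm
  intro x hx
  have := hr x hx
  clear hx
  induction this using Submodule.span_induction with
  | zero => simp
  | add u v _ _ hu hv => rw [add_lie, hu, hv, add_zero]
  | smul t u _ hu => rw [smul_lie, hu, smul_zero]
  | mem u hu =>
    obtain ⟨y, a, ha, rfl⟩ := hu
    rw [lie_lie, hN _ (N.lie_mem hm') a ha, hN m hm' a ha, lie_smul, sub_self]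

/-- Projections associated with `g = s ⊕ ⨁ V i`. -/
structure Proj {g : Type*} [LieRing g] [LieAlgebra ℂ g] (s : LieSubalgebra ℂ g)
    (V : Fin 4 → Submodule ℂ g) (π : Fin 4 → g →ₗ[ℂ] g) : Prop where
  mem : ∀ i x, π i x ∈ V i
  self : ∀ i x, x ∈ V i → π i x = x
  off : ∀ i j x, i ≠ j → x ∈ V j → π i x = 0
  offs : ∀ i x, x ∈ s → π i x = 0
  sum : ∀ x, x - ∑ i, π i x ∈ s
  inv : ∀ i, ∀ x ∈ s, ∀ w ∈ V i, ⁅x, w⁆ ∈ V i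

section
variable {g : Type*} [LieRing g] [LieAlgebra ℂ g]

theorem exists_proj (s : LieSubalgebra ℂ g) (hs : Symp.IsSl2Levi g s)
    (V : Fin 4 → Submodule ℂ g) (hdec : Symp.IsDecomp g s V) : ∃ π, Proj s V π := by
  obtain ⟨hirr, hind, hsup⟩ := hdec
  have hs2 := hs.2
  have hrad : ∀ i, V i ≤ (LieAlgebra.radical ℂ g).toSubmodule := fun i =>
    hsup ▸ le_iSup V i
  have hc : ∀ i, IsCompl (V i) (s.toSubmodule ⊔ ⨆ j ≠ i, V j) := by
    intro i
    constructor
    · rw [Submodule.disjoint_def]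
      intro x hx hx'
      obtain ⟨a, ha, b, hb, rfl⟩ := Submodule.mem_sup.1 hx'
      have hb' : b ∈ (LieAlgebra.radical ℂ g).toSubmodule :=
        (iSup₂_le fun j _ => hrad j) hb
      have ha' : a ∈ (LieAlgebra.radical ℂ g).toSubmodule := by
        have := sub_mem (hrad i hx) hb'
        simpa using this
      have ha0 : a = 0 := (Submodule.disjoint_def.1 hs2.disjoint) a ha ha'
      rw [ha0, zero_add] at hx ⊢
      exact (Submodule.disjoint_def.1 (hind i)) b hx hb
    · rw [codisjoint_iff, eq_top_iff, ← hs2.sup_eq_top, ← hsup]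
      refine sup_le (le_sup_of_le_right le_sup_left) (iSup_le fun j => ?_)
      by_cases hj : j = i
      · rw [hj]; exact le_sup_left
      · exact le_sup_of_le_right (le_sup_of_le_right (le_iSup₂_of_le j hj le_rfl))
  let π : Fin 4 → g →ₗ[ℂ] g := fun i => (V i).subtype ∘ₗ (V i).projectionOnto _ (hc i)
  have hm : ∀ i x, π i x ∈ V i := fun i x => ((V i).projectionOnto _ (hc i) x).2
  have hself : ∀ i x, x ∈ V i → π i x = x := by
    intro i x hx
    simpa [π] using congrArg Subtype.val (Submodule.projectionOnto_apply_left (hc i) ⟨x, hx⟩)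
  have hz : ∀ i x, x ∈ (s.toSubmodule ⊔ ⨆ j ≠ i, V j) → π i x = 0 := by
    intro i x hx
    simpa [π] using hx
  have hoff : ∀ i j x, i ≠ j → x ∈ V j → π i x = 0 := fun i j x hij hx =>
    hz i x ((le_sup_right : (⨆ j ≠ i, V j) ≤ _)
      ((le_iSup₂ (f := fun j (_ : j ≠ i) => V j) j hij.symm) hx))
  have hoffs : ∀ i x, x ∈ s → π i x = 0 := fun i x hx =>
    hz i x ((le_sup_left : s.toSubmodule ≤ _) hx)
  refine ⟨π, hm, hself, hoff, hoffs, ?_, fun i => (hirr i).2.1⟩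
  have : (⊤ : Submodule ℂ g) ≤ s.toSubmodule.comap (LinearMap.id - ∑ i, π i) := by
    rw [← hs2.sup_eq_top, ← hsup]
    refine sup_le ?_ (iSup_le fun j => ?_)
    · intro x hx
      simp [hoffs _ x hx]
      exact hx
    · intro x hx
      have : ∑ i, π i x = x := by
        rw [Finset.sum_eq_single j (fun i _ hi => hoff i j x hi hx) (by simp), hself j x hx]
      simp [this]
  intro x
  simpa using this (Submodule.mem_top (x := x))

variable {s : LieSubalgebra ℂ g} {V : Fin 4 → Submodule ℂ g} {π : Fin 4 → g →ₗ[ℂ] g}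

theorem Proj.decomp (P : Proj s V π) (x : g) : ∃ a ∈ s, x = a + ∑ i, π i x :=
  ⟨_, P.sum x, by abel⟩

theorem Proj.sum_self (P : Proj s V π) (j : Fin 4) {x : g} (hx : x ∈ V j) :
    ∑ i, π i x = x := by
  rw [Finset.sum_eq_single j (fun i _ hi => P.off i j x hi hx) (by simp), P.self j x hx]

theorem Proj.equiv (P : Proj s V π) (i : Fin 4) {a : g} (ha : a ∈ s) (x : g) :
    π i ⁅a, x⁆ = ⁅a, π i x⁆ := by
  obtain ⟨b, hb, hx⟩ := P.decomp x
  conv_lhs => rw [hx]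
  rw [lie_add, map_add, P.offs i _ (s.lie_mem ha hb), zero_add, lie_sum, map_sum,
    Finset.sum_eq_single i]
  · exact P.self i _ (P.inv i a ha _ (P.mem i x))
  · intro j _ hj
    exact P.off i j _ hj.symm (P.inv j a ha _ (P.mem j x))
  · simp

theorem Proj.finrank_le [FiniteDimensional ℂ g] (P : Proj s V π) :
    Module.finrank ℂ s + ∑ i, Module.finrank ℂ (V i) ≤ Module.finrank ℂ g := by
  let F : (s × (∀ i, V i)) →ₗ[ℂ] g :=
    LinearMap.coprod s.toSubmodule.subtype (∑ i, (V i).subtype ∘ₗ LinearMap.proj i)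
  have hF : Function.Injective F := by
    rw [← LinearMap.ker_eq_bot, LinearMap.ker_eq_bot']
    rintro ⟨a, v⟩ h
    have h1 : (a : g) + ∑ i, (v i : g) = 0 := by
      have h' := h
      simp [F] at h'
      exact h'
    have h2 : ∀ i, v i = 0 := by
      intro i
      have := congrArg (π i) h1
      rw [map_add, P.offs i _ a.2, zero_add, map_sum, Finset.sum_eq_single i
        (fun j _ hj => P.off i j _ hj.symm (v j).2) (by simp), P.self i _ (v i).2, map_zero] at this
      exact Subtype.ext this
    have h3 : (a : g) = 0 := by simpa [h2] using h1
    refine Prod.ext (Subtype.ext h3) (funext h2)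
  have := LinearMap.finrank_le_finrank_of_injective hF
  rwa [Module.finrank_prod, Module.finrank_pi_fintype] at this
end
end Symp18

namespace Symp18

/-- The relation `[V i, V j] = V q`. -/
def RR {g : Type*} [LieRing g] [LieAlgebra ℂ g] (V : Fin 4 → Submodule ℂ g)
    (i j q : Fin 4) : Prop := Symp.lieSpan2 g (V i) (V j) = V q

section
variable {g : Type*} [LieRing g] [LieAlgebra ℂ g]
variable {s : LieSubalgebra ℂ g} {V : Fin 4 → Submodule ℂ g} {π : Fin 4 → g →ₗ[ℂ] g}

theorem RR.mem {i j q : Fin 4} (h : RR V i j q) {x y : g} (hx : x ∈ V i) (hy : y ∈ V j) :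
    ⁅x, y⁆ ∈ V q := by
  have h' : Symp.lieSpan2 g (V i) (V j) = V q := h
  rw [← h']
  exact Submodule.subset_span ⟨x, hx, y, hy, rfl⟩

theorem RR.symm {i j q : Fin 4} (h : RR V i j q) : RR V j i q := by
  have h' : Symp.lieSpan2 g (V i) (V j) = V q := h
  show Symp.lieSpan2 g (V j) (V i) = V q
  rw [← h']
  have aux : ∀ A B : Submodule ℂ g, Symp.lieSpan2 g A B ≤ Symp.lieSpan2 g B A := by
    intro A B
    refine Submodule.span_le.2 ?_
    rintro _ ⟨x, hx, y, hy, rfl⟩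
    rw [← lie_skew]
    exact neg_mem (Submodule.subset_span ⟨y, hy, x, hx, rfl⟩)
  exact le_antisymm (aux _ _) (aux _ _)

theorem dich (hconv : Symp.Convention g V) (i j : Fin 4) :
    (∀ x ∈ V i, ∀ y ∈ V j, ⁅x, y⁆ = 0) ∨ ∃ q, RR V i j q := by
  by_cases h : Symp.lieSpan2 g (V i) (V j) = ⊥
  · left
    intro x hx y hy
    have : ⁅x, y⁆ ∈ Symp.lieSpan2 g (V i) (V j) := Submodule.subset_span ⟨x, hx, y, hy, rfl⟩
    rwa [h, Submodule.mem_bot] at this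
  · right
    obtain ⟨q, hq, -⟩ := hconv i j h
    exact ⟨q, hq⟩

theorem zero_of (hconv : Symp.Convention g V) {i j : Fin 4} (h : ∀ q, ¬ RR V i j q)
    {x y : g} (hx : x ∈ V i) (hy : y ∈ V j) : ⁅x, y⁆ = 0 := by
  rcases dich hconv i j with h1 | ⟨q, h1⟩
  · exact h1 x hx y hy
  · exact absurd h1 (h q)

theorem RR.exists_ne {i j q : Fin 4} (h : RR V i j q) (hq : V q ≠ ⊥) :
    ∃ x ∈ V i, ∃ y ∈ V j, ⁅x, y⁆ ≠ 0 := by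
  by_contra hc
  push Not at hc
  apply hq
  have h' : Symp.lieSpan2 g (V i) (V j) = V q := h
  rw [← h', eq_bot_iff]
  refine Submodule.span_le.2 ?_
  rintro _ ⟨x, hx, y, hy, rfl⟩
  simp [hc x hx y hy]

theorem Proj.index_unique (P : Proj s V π) {i j : Fin 4} (hi : V i ≠ ⊥) (h : V i ≤ V j) :
    i = j := by
  by_contra hij
  obtain ⟨x, hx, h0⟩ := (Submodule.ne_bot_iff _).1 hi
  exact h0 ((P.self i x hx).symm.trans (P.off i j x hij (h hx)))

theorem mem_rad (hdec : Symp.IsDecomp g s V) {i : Fin 4} {x : g} (hx : x ∈ V i) :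
    x ∈ LieAlgebra.radical ℂ g := by
  have : x ∈ (LieAlgebra.radical ℂ g).toSubmodule := hdec.2.2 ▸ (le_iSup V i hx)
  exact this

theorem RR_cent (hdec : Symp.IsDecomp g s V) (hZ : Symp.centerRad g = V 3) (j q : Fin 4) :
    ¬ RR V 3 j q := by
  intro h
  obtain ⟨x, hx, y, hy, h0⟩ := h.exists_ne (hdec.1 q).1
  rw [← hZ] at hx
  exact h0 (hx.2 y (mem_rad hdec hy))

theorem RR_nonc (P : Proj s V π) (hdec : Symp.IsDecomp g s V) (hconv : Symp.Convention g V)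
    (hZ : Symp.centerRad g = V 3) (i : Fin 4) (hi : i ≠ 3) : ∃ j q, RR V i j q := by
  by_contra hc
  push Not at hc
  refine hi (P.index_unique (hdec.1 i).1 ?_)
  intro x hx
  rw [← hZ]
  refine ⟨mem_rad hdec hx, fun y hy => ?_⟩
  have hy' : y ∈ ⨆ i, V i := by rw [hdec.2.2]; exact hy
  clear hy
  induction hy' using Submodule.iSup_induction' with
  | zero => simp
  | add u v _ _ hu hv => rw [lie_add, hu, hv, add_zero]
  | mem j y hy => exact zero_of hconv (hc j) hx hy

theorem pi_zero (P : Proj s V π) (hconv : Symp.Convention g V) {i l m q : Fin 4}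
    (h : ∀ j', RR V i m j' → ¬ RR V l j' q) {x y z : g} (hx : x ∈ V i) (hy : y ∈ V l)
    (hz : z ∈ V m) : π q ⁅y, ⁅x, z⁆⁆ = 0 := by
  rcases dich hconv i m with h1 | ⟨j', h1⟩
  · rw [h1 x hx z hz, lie_zero, map_zero]
  · rcases dich hconv l j' with h2 | ⟨q', h2⟩
    · rw [h2 y hy _ (h1.mem hx hz), map_zero]
    · refine P.off q q' _ ?_ (h2.mem hy (h1.mem hx hz))
      rintro rfl
      exact h j' h1 h2

theorem RR_jac (P : Proj s V π) (hdec : Symp.IsDecomp g s V) (hconv : Symp.Convention g V)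
    (l m j i q : Fin 4) (h1 : RR V l m j) (h2 : RR V i j q) :
    (∃ j', RR V i m j' ∧ RR V l j' q) ∨ (∃ j', RR V i l j' ∧ RR V m j' q) := by
  by_contra hc
  push Not at hc
  obtain ⟨hc1, hc2⟩ := hc
  have key : ∀ x ∈ V i, ∀ w ∈ V j, π q ⁅x, w⁆ = 0 := by
    intro x hx w hw
    have h1' : Symp.lieSpan2 g (V l) (V m) = V j := h1
    rw [← h1'] at hw
    have hw' : w ∈ Submodule.span ℂ {z : g | ∃ x ∈ V l, ∃ y ∈ V m, z = ⁅x, y⁆} := hw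
    clear hw
    induction hw' using Submodule.span_induction with
    | zero => simp
    | add u v _ _ hu hv => rw [lie_add, map_add, hu, hv, add_zero]
    | smul t u _ hu => rw [lie_smul, map_smul, hu, smul_zero]
    | mem u hu =>
      obtain ⟨y, hy, z, hz, rfl⟩ := hu
      rw [leibniz_lie, map_add, pi_zero P hconv hc1 hx hy hz, add_zero, ← lie_skew, map_neg,
        pi_zero P hconv hc2 hx hz hy, neg_zero]
  have hle : V q ≤ LinearMap.ker (π q) := by
    have h2' : Symp.lieSpan2 g (V i) (V j) = V q := h2
    rw [← h2']
    refine Submodule.span_le.2 ?_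
    rintro _ ⟨x, hx, y, hy, rfl⟩
    exact key x hx y hy
  obtain ⟨x, hx, h0⟩ := (Submodule.ne_bot_iff _).1 (hdec.1 q).1
  exact h0 ((P.self q x hx).symm.trans (hle hx))

theorem perf_span (hperf : Symp.IsPerfectLie g) (z : g) :
    z ∈ Submodule.span ℂ {z : g | ∃ x y : g, z = ⁅x, y⁆} := by
  have h : ⁅(⊤ : LieIdeal ℂ g), (⊤ : LieIdeal ℂ g)⁆ = ⊤ := hperf
  have h2 : z ∈ (⁅(⊤ : LieIdeal ℂ g), (⊤ : LieIdeal ℂ g)⁆).toSubmodule := by rw [h]; trivial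
  rw [LieSubmodule.lieIdeal_oper_eq_linear_span'] at h2
  refine Submodule.span_mono ?_ h2
  rintro _ ⟨x, -, y, -, rfl⟩
  exact ⟨x, y, rfl⟩

theorem rad_perf (hperf : Symp.IsPerfectLie g) (hs : Symp.IsSl2Levi g s) (x : g)
    (hx : x ∈ LieAlgebra.radical ℂ g) : x ∈ Submodule.span ℂ
      {z : g | ∃ y : g, ∃ a ∈ LieAlgebra.radical ℂ g, z = ⁅y, a⁆} := by
  set N := Submodule.span ℂ {z : g | ∃ y : g, ∃ a ∈ LieAlgebra.radical ℂ g, z = ⁅y, a⁆} with hN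
  have hNr : N ≤ (LieAlgebra.radical ℂ g).toSubmodule := by
    refine Submodule.span_le.2 ?_
    rintro _ ⟨y, a, ha, rfl⟩
    exact lie_mem_right ℂ g (LieAlgebra.radical ℂ g) y a ha
  have h1 : ∀ z : g, z ∈ s.toSubmodule ⊔ N := by
    intro z
    refine (Submodule.span_le.2 ?_) (perf_span hperf z)
    rintro _ ⟨y, w, rfl⟩
    have hy : y ∈ s.toSubmodule ⊔ (LieAlgebra.radical ℂ g).toSubmodule := by
      rw [hs.2.sup_eq_top]; trivial
    have hw : w ∈ s.toSubmodule ⊔ (LieAlgebra.radical ℂ g).toSubmodule := by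
      rw [hs.2.sup_eq_top]; trivial
    obtain ⟨y1, hy1, y2, hy2, rfl⟩ := Submodule.mem_sup.1 hy
    obtain ⟨w1, hw1, w2, hw2, rfl⟩ := Submodule.mem_sup.1 hw
    have : ⁅y1 + y2, w1 + w2⁆ = ⁅y1, w1⁆ + (⁅y1 + y2, w2⁆ + -⁅w1, y2⁆) := by
      rw [lie_skew, lie_add, add_lie, add_assoc, add_comm ⁅y2, w1⁆]
    rw [this]
    exact Submodule.add_mem_sup (s.lie_mem hy1 hw1)
      (add_mem (Submodule.subset_span ⟨_, _, hw2, rfl⟩)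
        (neg_mem (Submodule.subset_span ⟨_, _, hy2, rfl⟩)))
  obtain ⟨a, ha, b, hb, rfl⟩ := Submodule.mem_sup.1 (h1 x)
  have ha' : a ∈ (LieAlgebra.radical ℂ g).toSubmodule := by
    have := sub_mem (show a + b ∈ (LieAlgebra.radical ℂ g).toSubmodule from hx) (hNr hb)
    simpa using this
  rw [(Submodule.disjoint_def.1 hs.2.disjoint) a ha ha', zero_add]
  exact hb

theorem RR_nak [FiniteDimensional ℂ g] (P : Proj s V π) (hperf : Symp.IsPerfectLie g)
    (hs : Symp.IsSl2Levi g s)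
    (hdec : Symp.IsDecomp g s V) (hconv : Symp.Convention g V)
    (S : Fin 4 → Prop) (hS : ∃ i, S i) (hcl : ∀ i j q, S j → RR V i j q → S q) :
    ∃ j, S j ∧ ∀ i j', S j' → ¬ RR V i j' j := by
  by_contra hc
  push Not at hc
  have hVI : ∀ j, S j → V j ≤ ⨆ i, ⨆ (_ : S i), V i := fun j hj => le_iSup₂_of_le j hj le_rfl
  let I : LieSubmodule ℂ g g :=
    { (⨆ i, ⨆ (_ : S i), V i : Submodule ℂ g) with
      lie_mem := by
        intro x m hm
        have : (⨆ i, ⨆ (_ : S i), V i : Submodule ℂ g) ≤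
            (⨆ i, ⨆ (_ : S i), V i : Submodule ℂ g).comap (LieModule.toEnd ℂ g g x) := by
          refine iSup₂_le fun j hj y hy => ?_
          obtain ⟨a, ha, hx⟩ := P.decomp x
          rw [Submodule.mem_comap, LieModule.toEnd_apply_apply, hx, add_lie, sum_lie]
          refine add_mem (hVI j hj (P.inv j a ha y hy)) (Submodule.sum_mem _ fun i _ => ?_)
          rcases dich hconv i j with h1 | ⟨q, h1⟩
          · rw [h1 _ (P.mem i x) y hy]; exact zero_mem _
          · exact hVI q (hcl i j q hj h1) (h1.mem (P.mem i x) hy)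
        exact this hm }
  have hnt : Nontrivial I := by
    obtain ⟨i, hi⟩ := hS
    obtain ⟨x, hx, h0⟩ := (Submodule.ne_bot_iff _).1 (hdec.1 i).1
    exact ⟨⟨⟨x, hVI i hi hx⟩, 0, fun h => h0 (congrArg Subtype.val h)⟩⟩
  obtain ⟨ψ, h0, hψ⟩ := fixed_vector (rad_perf hperf hs) (Module.Dual ℂ I)
  apply h0
  have hle : (⨆ i, ⨆ (_ : S i), V i : Submodule ℂ g) ≤
      (LinearMap.ker ψ).map I.toSubmodule.subtype := by
    refine iSup₂_le fun j hj => ?_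
    obtain ⟨i, j', hj', hR⟩ := hc j hj
    have hR' : Symp.lieSpan2 g (V i) (V j') = V j := hR
    rw [← hR']
    refine Submodule.span_le.2 ?_
    rintro _ ⟨x, hx, y, hy, rfl⟩
    refine ⟨(⁅x, (⟨y, hVI j' hj' hy⟩ : I)⁆ : I), ?_, rfl⟩
    have := congrArg (fun φ : Module.Dual ℂ I => φ ⟨y, hVI j' hj' hy⟩) (hψ x (mem_rad hdec hx))
    have h2 : - ψ ⁅x, (⟨y, hVI j' hj' hy⟩ : I)⁆ = 0 := this
    exact neg_eq_zero.1 h2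
  ext ⟨m, hm⟩
  obtain ⟨m', hm', hmm⟩ := hle hm
  have : m' = ⟨m, hm⟩ := Subtype.ext hmm
  rw [← this]
  exact hm'

theorem pi_lie_rad (P : Proj s V π) (hconv : Symp.Convention g V) {a : Fin 4}
    (ha : ∀ i j, ¬ RR V i j a) (x y : g) : π a ⁅∑ i, π i x, ∑ i, π i y⁆ = 0 := by
  rw [sum_lie, map_sum]
  refine Finset.sum_eq_zero fun i _ => ?_
  rw [lie_sum, map_sum]
  refine Finset.sum_eq_zero fun j _ => ?_
  rcases dich hconv i j with h1 | ⟨q, h1⟩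
  · rw [h1 _ (P.mem i x) _ (P.mem j y), map_zero]
  · refine P.off a q _ ?_ (h1.mem (P.mem i x) (P.mem j y))
    rintro rfl
    exact ha i j h1

theorem gen_nontriv (P : Proj s V π) (hperf : Symp.IsPerfectLie g)
    (hdec : Symp.IsDecomp g s V) (hconv : Symp.Convention g V) {a : Fin 4}
    (ha : ∀ i j, ¬ RR V i j a) : ∃ x ∈ s, ∃ v ∈ V a, ⁅x, v⁆ ≠ 0 := by
  by_contra hc
  push Not at hc
  obtain ⟨x, hx, h0⟩ := (Submodule.ne_bot_iff _).1 (hdec.1 a).1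
  apply h0
  rw [← P.self a x hx]
  have : Submodule.span ℂ {z : g | ∃ x y : g, z = ⁅x, y⁆} ≤ LinearMap.ker (π a) := by
    refine Submodule.span_le.2 ?_
    rintro _ ⟨x, y, rfl⟩
    obtain ⟨b, hb, hx⟩ := P.decomp x
    obtain ⟨d, hd, hy⟩ := P.decomp y
    show π a ⁅x, y⁆ = 0
    have e1 : ⁅x, y⁆ = ⁅b, y⁆ + (-⁅d, ∑ i, π i x⁆ + ⁅∑ i, π i x, ∑ i, π i y⁆) := by
      conv_lhs => rw [hx, add_lie]
      congr 1
      conv_lhs => rw [hy, lie_add]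
      rw [lie_skew]
    rw [e1, map_add, map_add, map_neg, pi_lie_rad P hconv ha, P.equiv a hb, P.equiv a hd,
      hc b hb _ (P.mem _ _), hc d hd _ (P.mem _ _)]
    simp
  exact this (perf_span hperf x)
end
end Symp18

namespace Symp18

/-- All the structural data attached to `g`. -/
structure Ctx {g : Type*} [LieRing g] [LieAlgebra ℂ g] (s : LieSubalgebra ℂ g)
    (V : Fin 4 → Submodule ℂ g) (π : Fin 4 → g →ₗ[ℂ] g) (e f h : g) (N : Fin 4 → ℕ)
    (v : Fin 4 → ℕ → g) : Prop where
  P : Proj s V π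
  std : ∀ i, StdSeq e f h (N i) (v i)
  spn : ∀ i, Submodule.span ℂ (Set.range (v i)) = V i
  fmem : f ∈ s
  gen : ∀ x ∈ s, ∃ a b c : ℂ, x = a • e + b • f + c • h
  cen : ∀ b ∈ s, (∀ a ∈ s, ⁅a, b⁆ = 0) → b = 0
  dec : Symp.IsDecomp g s V
  conv : Symp.Convention g V
  cenrad : Symp.centerRad g = V 3

theorem triple_cen {g : Type*} [LieRing g] [LieAlgebra ℂ g] {s : LieSubalgebra ℂ g}
    {e f h : s} (t : IsSl2Triple h e f)
    (gen : ∀ x : s, ∃ a b c : ℂ, x = a • e + b • f + c • h) (b : g) (hb : b ∈ s)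
    (hc : ∀ a ∈ s, ⁅a, b⁆ = 0) : b = 0 := by
  obtain ⟨α, β, γ, hx⟩ := gen ⟨b, hb⟩
  have hc' : ∀ a : s, ⁅a, α • e + β • f + γ • h⁆ = 0 := by
    intro a
    rw [← hx]
    exact Subtype.ext (hc a a.2)
  have h1 := hc' h
  simp only [lie_add, lie_smul, lie_self, t.lie_h_e_smul ℂ, t.lie_lie_smul_f ℂ] at h1
  have h2 := hc' e
  have hhe : ⁅e, h⁆ = -((2 : ℂ) • e) := by rw [← lie_skew, t.lie_h_e_smul ℂ]
  simp only [lie_add, lie_smul, lie_self, t.lie_e_f, hhe] at h2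
  have h3 := congrArg (fun z => ⁅h, z⁆) h2
  simp only [lie_add, lie_smul, lie_self, lie_zero, lie_neg, t.lie_h_e_smul ℂ] at h3
  have hγ : γ = 0 := by
    have : (-(4 * γ)) • e = 0 := by rw [← h3]; module
    rcases smul_eq_zero.1 this with h4 | h4
    · simpa using h4
    · exact absurd h4 t.e_ne_zero
  have hβ : β = 0 := by
    have : β • h = 0 := by rw [hγ] at h2; rw [← h2]; module
    exact (smul_eq_zero.1 this).resolve_right t.h_ne_zero
  have hα : α = 0 := by
    have : (2 * α) • e = 0 := by rw [hγ, hβ] at h1; rw [← h1]; module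
    rcases smul_eq_zero.1 this with h4 | h4
    · simpa using h4
    · exact absurd h4 t.e_ne_zero
  rw [hα, hβ, hγ] at hx
  have := congrArg Subtype.val hx
  simpa using this

section
variable {g : Type*} [LieRing g] [LieAlgebra ℂ g]
variable {s : LieSubalgebra ℂ g} {V : Fin 4 → Submodule ℂ g} {π : Fin 4 → g →ₗ[ℂ] g}
  {e f h : g} {N : Fin 4 → ℕ} {v : Fin 4 → ℕ → g}

theorem Ctx.inner_form (C : Ctx s V π e f h N v)
    (hD : ∀ D : LieDerivation ℂ g g, Symp.IsInnerDer D) (E : g →ₗ[ℂ] g)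
    (hE0 : ∀ a ∈ s, E a = 0) (hEs : ∀ a ∈ s, ∀ x, E ⁅a, x⁆ = ⁅a, E x⁆)
    (hEV : ∀ i j, ∀ x ∈ V i, ∀ y ∈ V j, E ⁅x, y⁆ = ⁅x, E y⁆ - ⁅y, E x⁆) :
    ∃ x : g, x = ∑ i, π i x ∧ (∀ a ∈ s, ∀ i, ⁅a, π i x⁆ = 0) ∧ ∀ y, E y = ⁅x, y⁆ := by
  have P := C.P
  have A1 : ∀ a ∈ s, ∀ x, E ⁅x, a⁆ = ⁅x, E a⁆ - ⁅a, E x⁆ := by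
    intro a ha x
    rw [← lie_skew, map_neg, hEs a ha, hE0 a ha]; simp
  have A2 : ∀ a ∈ s, ∀ x, E ⁅a, x⁆ = ⁅a, E x⁆ - ⁅x, E a⁆ := by
    intro a ha x
    rw [hEs a ha, hE0 a ha]; simp
  have A3 : ∀ i, ∀ x ∈ V i, ∀ y, E ⁅x, y⁆ = ⁅x, E y⁆ - ⁅y, E x⁆ := by
    intro i x hx y
    obtain ⟨d, hd, hy⟩ := P.decomp y
    rw [hy]
    simp only [lie_add, add_lie, map_add, lie_sum, sum_lie, map_sum, A1 d hd,
      hEV i _ x hx _ (P.mem _ _), Finset.sum_sub_distrib]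
    abel
  have A4 : ∀ x y, E ⁅x, y⁆ = ⁅x, E y⁆ - ⁅y, E x⁆ := by
    intro x y
    obtain ⟨d, hd, hx⟩ := P.decomp x
    rw [hx]
    simp only [lie_add, add_lie, map_add, lie_sum, sum_lie, map_sum, A2 d hd,
      A3 _ _ (P.mem _ _), Finset.sum_sub_distrib]
    abel
  obtain ⟨x, hx⟩ := hD { toLinearMap := E, leibniz' := A4 }
  have hx' : ∀ y, E y = ⁅x, y⁆ := hx
  have hxs : ∀ a ∈ s, ⁅a, x⁆ = 0 := by
    intro a ha
    rw [← lie_skew, ← hx', hE0 a ha, neg_zero]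
  have hpi : ∀ a ∈ s, ∀ i, ⁅a, π i x⁆ = 0 := by
    intro a ha i
    rw [← P.equiv i ha, hxs a ha, map_zero]
  refine ⟨x, ?_, hpi, hx'⟩
  have : x - ∑ i, π i x = 0 := by
    refine C.cen _ (P.sum x) fun a ha => ?_
    rw [lie_sub, lie_sum, hxs a ha]
    simp [hpi a ha]
  exact sub_eq_zero.1 this

theorem Ctx.grading (C : Ctx s V π e f h N v)
    (hD : ∀ D : LieDerivation ℂ g g, Symp.IsInnerDer D) (w : Fin 4 → ℂ)
    (hw : ∀ i j q, RR V i j q → w i + w j = w q) (a : Fin 4) (ha : ∀ i j, ¬ RR V i j a)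
    (hwa : w a ≠ 0) : False := by
  have P := C.P
  let E : g →ₗ[ℂ] g := ∑ i, w i • π i
  have hE : ∀ x, E x = ∑ i, w i • π i x := by intro x; simp [E]
  have hEV : ∀ i, ∀ x ∈ V i, E x = w i • x := by
    intro i x hx
    rw [hE, Finset.sum_eq_single i (fun j _ hj => by rw [P.off j i x hj hx, smul_zero]) (by simp),
      P.self i x hx]
  obtain ⟨x, hx, -, hxy⟩ := C.inner_form hD E
    (fun a ha => by rw [hE]; simp [P.offs _ a ha])
    (fun a ha x => by rw [hE, hE, lie_sum]; simp [P.equiv _ ha])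
    (by
      intro i j x hx y hy
      rw [hEV i x hx, hEV j y hy, lie_smul, lie_smul, ← lie_skew y x, smul_neg, sub_neg_eq_add,
        ← add_smul]
      rcases dich C.conv i j with h1 | ⟨q, h1⟩
      · rw [h1 x hx y hy, smul_zero, map_zero]
      · rw [hEV q _ (h1.mem hx hy), ← hw i j q h1, add_comm])
  obtain ⟨y, hy, h0⟩ := (Submodule.ne_bot_iff _).1 (C.dec.1 a).1
  have h1 := hxy y
  rw [hEV a y hy, hx, ← P.sum_self a hy] at h1
  have h2 := congrArg (π a) h1
  rw [pi_lie_rad P C.conv ha, P.sum_self a hy, map_smul, P.self a y hy] at h2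
  exact (smul_ne_zero hwa h0) h2

theorem Ctx.vmem (C : Ctx s V π e f h N v) (i : Fin 4) (j : ℕ) : v i j ∈ V i := by
  rw [← C.spn i]; exact Submodule.subset_span ⟨j, rfl⟩

theorem Ctx.central (C : Ctx s V π e f h N v)
    (hD : ∀ D : LieDerivation ℂ g g, Symp.IsInnerDer D) (b : Fin 4) (hb3 : b ≠ 3)
    (hb : ∀ i j, ¬ RR V i j b) (hN : N b = N 3) :
    ∃ x : g, x = ∑ i, π i x ∧ (∀ a ∈ s, ∀ i, ⁅a, π i x⁆ = 0) ∧ x ≠ 0 ∧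
      ∀ i, i ≠ b → ∀ y ∈ V i, ⁅x, y⁆ = 0 := by
  have P := C.P
  have Sb := C.std b
  have S3 := C.std 3
  obtain ⟨θ, hθ⟩ : ∃ θ : g →ₗ[ℂ] g, ∀ i, θ (v b i) = v 3 i := by
    obtain ⟨θ, hθ⟩ := LinearMap.exists_extend
      ((Module.Basis.span Sb.linInd).constr ℂ (fun i => v 3 (i : ℕ)))
    refine ⟨θ, fun i => ?_⟩
    by_cases hi : i ≤ N b
    · have h1 := LinearMap.congr_fun hθ (Module.Basis.span Sb.linInd ⟨i, by omega⟩)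
      rw [Module.Basis.constr_basis] at h1
      simpa [Module.Basis.span_apply] using h1
    · rw [Sb.zero i (by omega), S3.zero i (by omega), map_zero]
  have hθV : ∀ y ∈ V b, θ y ∈ V 3 := by
    intro y hy
    rw [← C.spn b] at hy
    induction hy using Submodule.span_induction with
    | zero => simp
    | add u v _ _ hu hv => rw [map_add]; exact add_mem hu hv
    | smul t u _ hu => rw [map_smul]; exact Submodule.smul_mem _ _ hu
    | mem u hu => obtain ⟨i, rfl⟩ := hu; rw [hθ]; exact C.vmem 3 i
  have hθs : ∀ a ∈ s, ∀ y ∈ V b, θ ⁅a, y⁆ = ⁅a, θ y⁆ := by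
    intro a ha y hy
    rw [← C.spn b] at hy
    induction hy using Submodule.span_induction with
    | zero => simp
    | add u v _ _ hu hv => simp only [lie_add, map_add, hu, hv]
    | smul t u _ hu => simp only [lie_smul, map_smul, hu]
    | mem u hu =>
      obtain ⟨i, rfl⟩ := hu
      obtain ⟨c1, c2, c3, rfl⟩ := C.gen a ha
      have he : θ ⁅e, v b i⁆ = ⁅e, v 3 i⁆ := by
        cases i with
        | zero => rw [Sb.lie_e0, S3.lie_e0, map_zero]
        | succ i => rw [Sb.lie_e, S3.lie_e, map_smul, hθ, hN]
      simp only [add_lie, smul_lie, map_add, map_smul, hθ, he, Sb.lie_f, S3.lie_f, Sb.lie_h,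
        S3.lie_h, hN]
  obtain ⟨x, hx, hxs, hxy⟩ := C.inner_form hD (θ ∘ₗ π b)
    (fun a ha => by simp [P.offs b a ha])
    (fun a ha x => by
      rw [LinearMap.comp_apply, LinearMap.comp_apply, P.equiv b ha, hθs a ha _ (P.mem b x)])
    (by
      intro i j x hx y hy
      have z1 : ∀ (k : Fin 4) (x y : g), x ∈ V k → ⁅x, (θ ∘ₗ π b) y⁆ = 0 := by
        intro k x y hx
        have h1 : θ (π b y) ∈ V 3 := hθV _ (P.mem b y)
        rw [← C.cenrad] at h1
        rw [← lie_skew, LinearMap.comp_apply, h1.2 x (mem_rad C.dec hx), neg_zero]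
      rw [z1 i x y hx, z1 j y x hy, sub_zero, LinearMap.comp_apply]
      rcases dich C.conv i j with h1 | ⟨q, h1⟩
      · rw [h1 x hx y hy, map_zero, map_zero]
      · rw [P.off b q _ (by rintro rfl; exact hb i j h1) (h1.mem hx hy), map_zero])
  refine ⟨x, hx, hxs, ?_, ?_⟩
  · rintro rfl
    have := hxy (v b 0)
    rw [LinearMap.comp_apply, P.self b _ (C.vmem b 0), hθ, zero_lie] at this
    exact S3.ne 0 (Nat.zero_le _) this
  · intro i hi y hy
    rw [← hxy, LinearMap.comp_apply, P.off b i y hi.symm hy, map_zero]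

theorem Ctx.triv (C : Ctx s V π e f h N v) (i : Fin 4) {y : g} (hy : y ∈ V i) (h0 : y ≠ 0)
    (hs : ∀ a ∈ s, ⁅a, y⁆ = 0) : V i = Submodule.span ℂ {y} ∧ N i = 0 := by
  have h1 : V i = Submodule.span ℂ {y} := by
    rcases (C.dec.1 i).2.2 (Submodule.span ℂ {y}) (by simpa using hy) (by
      intro a ha w hw
      obtain ⟨c, rfl⟩ := Submodule.mem_span_singleton.1 hw
      rw [lie_smul, hs a ha, smul_zero]; exact zero_mem _) with h2 | h2
    · simp at h2; exact absurd h2 h0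
    · exact h2.symm
  refine ⟨h1, ?_⟩
  have h2 := C.vmem i 0
  rw [h1] at h2
  obtain ⟨c, hc⟩ := Submodule.mem_span_singleton.1 h2
  have h3 : v i 1 = 0 := by
    rw [← (C.std i).lie_f 0, ← hc, lie_smul, hs f C.fmem, smul_zero]
  by_contra hn
  exact (C.std i).ne 1 (by omega) h3

theorem Ctx.gen_pos (C : Ctx s V π e f h N v) (hperf : Symp.IsPerfectLie g) {a : Fin 4}
    (ha : ∀ i j, ¬ RR V i j a) : N a ≠ 0 := by
  intro h0
  obtain ⟨x, hx, w, hw, hne⟩ := gen_nontriv C.P hperf C.dec C.conv ha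
  apply hne
  obtain ⟨c1, c2, c3, rfl⟩ := C.gen x hx
  rw [← C.spn a] at hw
  clear hne
  have S := C.std a
  induction hw using Submodule.span_induction with
  | zero => simp
  | add u v _ _ hu hv => rw [lie_add, hu, hv, add_zero]
  | smul t u _ hu => rw [lie_smul, hu, smul_zero]
  | mem u hu =>
    obtain ⟨i, rfl⟩ := hu
    cases i with
    | zero =>
      have h1 : ⁅f, v a 0⁆ = 0 := by rw [S.lie_f, S.zero _ (by omega)]
      have h2 : ⁅h, v a 0⁆ = 0 := by rw [S.lie_h, h0]; simp
      simp [add_lie, smul_lie, S.lie_e0, h1, h2]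
    | succ i => rw [S.zero _ (by omega), lie_zero]

theorem Ctx.central_b (C : Ctx s V π e f h N v) (hperf : Symp.IsPerfectLie g)
    (hD : ∀ D : LieDerivation ℂ g g, Symp.IsInnerDer D) {a b c : Fin 4}
    (hd : a ≠ b ∧ a ≠ c ∧ b ≠ c ∧ a ≠ 3 ∧ b ≠ 3 ∧ c ≠ 3)
    (cv : ∀ i : Fin 4, i = a ∨ i = b ∨ i = c ∨ i = 3)
    (ha : ∀ i j, ¬ RR V i j a) (hb : ∀ i j, ¬ RR V i j b) (hac : RR V a c 3) :
    N b ≠ N 3 := by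
  intro hN
  obtain ⟨x, hx, hxs, h0, hxy⟩ := C.central hD b hd.2.2.2.2.1 hb hN
  have hb0 := C.gen_pos hperf hb
  have ha0 := C.gen_pos hperf ha
  have z : ∀ i, N i ≠ 0 → π i x = 0 := by
    intro i hi
    by_contra hne
    exact hi (C.triv i (C.P.mem i x) hne (fun a ha => hxs a ha i)).2
  have hxc : x = π c x := by
    conv_lhs => rw [hx]
    refine Finset.sum_eq_single c (fun i _ hi => ?_) (by simp)
    apply z
    rcases cv i with rfl | rfl | rfl | rfl
    · exact ha0
    · exact hb0
    · exact absurd rfl hi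
    · rw [← hN]; exact hb0
  have hxc' : x ∈ V c := by rw [hxc]; exact C.P.mem c x
  obtain ⟨hV, -⟩ := C.triv c hxc' h0 (fun a ha => by rw [hxc]; exact hxs a ha c)
  obtain ⟨y, hy, w, hw, hne⟩ := hac.exists_ne (C.dec.1 3).1
  rw [hV] at hw
  obtain ⟨t, rfl⟩ := Submodule.mem_span_singleton.1 hw
  apply hne
  rw [lie_smul, ← lie_skew, hxy a hd.1 y hy, neg_zero, smul_zero]

theorem Ctx.central_a (C : Ctx s V π e f h N v) (hperf : Symp.IsPerfectLie g)
    (hD : ∀ D : LieDerivation ℂ g g, Symp.IsInnerDer D) {a b c : Fin 4}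
    (hd : a ≠ b ∧ a ≠ c ∧ b ≠ c ∧ a ≠ 3 ∧ b ≠ 3 ∧ c ≠ 3)
    (cv : ∀ i : Fin 4, i = a ∨ i = b ∨ i = c ∨ i = 3)
    (ha : ∀ i j, ¬ RR V i j a) (hb : ∀ i j, ¬ RR V i j b) (hc : N c ≠ 0) :
    N a ≠ N 3 := by
  intro hN
  obtain ⟨x, hx, hxs, h0, -⟩ := C.central hD a hd.2.2.2.1 ha hN
  have hb0 := C.gen_pos hperf hb
  have ha0 := C.gen_pos hperf ha
  apply h0
  rw [hx]
  refine Finset.sum_eq_zero fun i _ => ?_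
  by_contra hne
  have := (C.triv i (C.P.mem i x) hne (fun a ha => hxs a ha i)).2
  rcases cv i with rfl | rfl | rfl | rfl
  · exact ha0 this
  · exact hb0 this
  · exact hc this
  · rw [← hN] at this; exact ha0 this
end
end Symp18

namespace Symp18

/-- Boolean check of the numerical case 1. -/
def chk1 (m k n p : ℕ) : Bool :=
  !decide (n + 2 * m + p + (4 * k + 2) ≤ 17) ||
  !decide (k < m) ||
  !decide (2 * m ≠ 4 * k + 2) ||
  !decide ((p = 0 ∨ n ≠ 4 * k + 2)) ||
  !decide (4 * k + 2 ≤ n + p) ||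
  !decide (n ≤ 4 * k + 2 + p) ||
  !decide (p ≤ 4 * k + 2 + n) ||
  !decide (p ≤ n + 2 * m) ||
  !decide (n ≤ p + 2 * m) ||
  !decide (2 * m ≤ n + p) ||
  !decide (n % 2 = p % 2) ||
  !decide (p % 2 = 0) ||
  !decide (4 * k + 2 ≤ 2 * m + p) ||
  !decide (p ≤ 4 * k + 2 + 2 * m) ||
  !decide (2 * m ≤ 4 * k + 2 + p) ||
  decide ((2 * m, n, p, 4 * k + 2) ∈ ([(4, 4, 2, 2), (4, 4, 4, 2), (6, 4, 4, 2), (4, 6, 4, 2), (4, 4, 6, 2), (4, 2, 4, 6), (4, 4, 2, 6)] : List (ℕ × ℕ × ℕ × ℕ)))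

theorem chk1_all : ∀ m < 9, ∀ k < 4, ∀ n < 18, ∀ p < 18, chk1 m k n p = true := by
  decide +kernel

theorem aux1 (m : ℕ) (hm : m < 9) (k : ℕ) (hk : k < 4) (n : ℕ) (hn : n < 18) (p : ℕ) (hp : p < 18)
    (h0 : n + 2 * m + p + (4 * k + 2) ≤ 17)
    (h1 : k < m)
    (h2 : 2 * m ≠ 4 * k + 2)
    (h3 : (p = 0 ∨ n ≠ 4 * k + 2))
    (h4 : 4 * k + 2 ≤ n + p)
    (h5 : n ≤ 4 * k + 2 + p)
    (h6 : p ≤ 4 * k + 2 + n)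
    (h7 : p ≤ n + 2 * m)
    (h8 : n ≤ p + 2 * m)
    (h9 : 2 * m ≤ n + p)
    (h10 : n % 2 = p % 2)
    (h11 : p % 2 = 0)
    (h12 : 4 * k + 2 ≤ 2 * m + p)
    (h13 : p ≤ 4 * k + 2 + 2 * m)
    (h14 : 2 * m ≤ 4 * k + 2 + p) :
    (2 * m, n, p, 4 * k + 2) ∈ ([(4, 4, 2, 2), (4, 4, 4, 2), (6, 4, 4, 2), (4, 6, 4, 2), (4, 4, 6, 2), (4, 2, 4, 6), (4, 4, 2, 6)] : List (ℕ × ℕ × ℕ × ℕ)) := by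
  have h := chk1_all m hm k hk n hn p hp
  unfold chk1 at h
  rw [decide_eq_true h0, decide_eq_true h1, decide_eq_true h2, decide_eq_true h3, decide_eq_true h4, decide_eq_true h5, decide_eq_true h6, decide_eq_true h7, decide_eq_true h8, decide_eq_true h9, decide_eq_true h10, decide_eq_true h11, decide_eq_true h12, decide_eq_true h13, decide_eq_true h14] at h
  simpa only [Bool.not_true, Bool.false_or, decide_eq_true_eq] using h

/-- Boolean check of the numerical case 2. -/
def chk2 (m k n p : ℕ) : Bool :=
  !decide (n + 2 * m + p + (4 * k + 2) ≤ 17) ||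
  !decide (k < m) ||
  !decide (2 * m ≠ 4 * k + 2) ||
  !decide ((p = 0 ∨ n ≠ 4 * k + 2)) ||
  !decide (4 * k + 2 ≤ n + p) ||
  !decide (n ≤ 4 * k + 2 + p) ||
  !decide (p ≤ 4 * k + 2 + n) ||
  !decide (p ≤ n + 2 * m) ||
  !decide (n ≤ p + 2 * m) ||
  !decide (2 * m ≤ n + p) ||
  !decide (n % 2 = p % 2) ||
  !decide (p % 2 = 0) ||
  decide ((n, 2 * m, p, 4 * k + 2) ∈ ([(4, 4, 2, 2), (4, 6, 2, 2), (4, 4, 4, 2), (6, 4, 4, 2), (4, 6, 4, 2), (4, 4, 6, 2),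
      (2, 4, 4, 6), (4, 4, 2, 6)] : List (ℕ × ℕ × ℕ × ℕ)))

theorem chk2_all : ∀ m < 9, ∀ k < 4, ∀ n < 18, ∀ p < 18, chk2 m k n p = true := by
  decide +kernel

theorem aux2 (m : ℕ) (hm : m < 9) (k : ℕ) (hk : k < 4) (n : ℕ) (hn : n < 18) (p : ℕ) (hp : p < 18)
    (h0 : n + 2 * m + p + (4 * k + 2) ≤ 17)
    (h1 : k < m)
    (h2 : 2 * m ≠ 4 * k + 2)
    (h3 : (p = 0 ∨ n ≠ 4 * k + 2))
    (h4 : 4 * k + 2 ≤ n + p)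
    (h5 : n ≤ 4 * k + 2 + p)
    (h6 : p ≤ 4 * k + 2 + n)
    (h7 : p ≤ n + 2 * m)
    (h8 : n ≤ p + 2 * m)
    (h9 : 2 * m ≤ n + p)
    (h10 : n % 2 = p % 2)
    (h11 : p % 2 = 0) :
    (n, 2 * m, p, 4 * k + 2) ∈ ([(4, 4, 2, 2), (4, 6, 2, 2), (4, 4, 4, 2), (6, 4, 4, 2), (4, 6, 4, 2), (4, 4, 6, 2),
      (2, 4, 4, 6), (4, 4, 2, 6)] : List (ℕ × ℕ × ℕ × ℕ)) := by
  have h := chk2_all m hm k hk n hn p hp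
  unfold chk2 at h
  rw [decide_eq_true h0, decide_eq_true h1, decide_eq_true h2, decide_eq_true h3, decide_eq_true h4, decide_eq_true h5, decide_eq_true h6, decide_eq_true h7, decide_eq_true h8, decide_eq_true h9, decide_eq_true h10, decide_eq_true h11] at h
  simpa only [Bool.not_true, Bool.false_or, decide_eq_true_eq] using h

theorem num1 {n m p k r0 r1 r2 r3 : ℕ} (hs : n + m + p + k ≤ 17) (hm0 : m ≠ 0)
    (hmk : m ≠ k) (hnk : p ≠ 0 → n ≠ k)
    (b1 : m + m = k + 2 * r0) (b3 : r0 % 2 = 1)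
    (c1 : n + p = k + 2 * r3) (c2 : r3 ≤ n) (c3 : r3 ≤ p)
    (d1 : n + m = p + 2 * r1) (d2 : r1 ≤ n) (d3 : r1 ≤ m)
    (e1 : m + p = k + 2 * r2) (e2 : r2 ≤ m) (e3 : r2 ≤ p) :
    (m, n, p, k) ∈ ([(4, 4, 2, 2), (4, 4, 4, 2), (6, 4, 4, 2), (4, 6, 4, 2), (4, 4, 6, 2), (4, 2, 4, 6), (4, 4, 2, 6)] : List (ℕ × ℕ × ℕ × ℕ)) := by
  obtain ⟨m', rfl⟩ : ∃ m', m = 2 * m' := ⟨m / 2, by omega⟩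
  obtain ⟨k', rfl⟩ : ∃ k', k = 4 * k' + 2 := ⟨k / 4, by omega⟩
  exact aux1 m' (by omega) k' (by omega) n (by omega) p (by omega)
    (by omega) (by omega) (by omega) (by omega) (by omega) (by omega) (by omega) (by omega) (by omega) (by omega) (by omega) (by omega) (by omega) (by omega) (by omega)

theorem num2 {n m p k r0 r1 r3 : ℕ} (hs : n + m + p + k ≤ 17) (hm0 : m ≠ 0)
    (hmk : m ≠ k) (hnk : p ≠ 0 → n ≠ k)
    (b1 : m + m = k + 2 * r0) (b3 : r0 % 2 = 1)
    (c1 : n + p = k + 2 * r3) (c2 : r3 ≤ n) (c3 : r3 ≤ p)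
    (d1 : n + m = p + 2 * r1) (d2 : r1 ≤ n) (d3 : r1 ≤ m) (ev : n % 2 = 0) :
    (n, m, p, k) ∈ ([(4, 4, 2, 2), (4, 6, 2, 2), (4, 4, 4, 2), (6, 4, 4, 2), (4, 6, 4, 2), (4, 4, 6, 2),
      (2, 4, 4, 6), (4, 4, 2, 6)] : List (ℕ × ℕ × ℕ × ℕ)) := by
  obtain ⟨m', rfl⟩ : ∃ m', m = 2 * m' := ⟨m / 2, by omega⟩
  obtain ⟨k', rfl⟩ : ∃ k', k = 4 * k' + 2 := ⟨k / 4, by omega⟩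
  exact aux2 m' (by omega) k' (by omega) n (by omega) p (by omega)
    (by omega) (by omega) (by omega) (by omega) (by omega) (by omega) (by omega) (by omega) (by omega) (by omega) (by omega) (by omega)

theorem num3 {n m p k r0 r1 r2 r3 : ℕ} (hs : n + m + p + k ≤ 17) (hm0 : m ≠ 0)
    (hmk : m ≠ k) (hnk : p ≠ 0 → n ≠ k)
    (b1 : m + m = k + 2 * r0) (b3 : r0 % 2 = 1)
    (c1 : n + p = k + 2 * r3) (c2 : r3 ≤ n) (c3 : r3 ≤ p)
    (d1 : n + n = p + 2 * r1) (d3 : r1 % 2 = 1)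
    (e1 : n + m = k + 2 * r2) (e2 : r2 ≤ n) (e3 : r2 ≤ m) :
    (n = 4 ∧ p = 2 ∧ k = 2) ∨ (n = 4 ∧ p = 6 ∧ k = 2) ∨ (n = 4 ∧ p = 2 ∧ k = 6) := by
  have : m ≤ 17 := by omega
  interval_cases m <;> omega
end Symp18

namespace Symp18

theorem TTbad {u w c k r1 r2 : ℕ}
    (hmem : (u, w, c, k) ∈ ([(4, 4, 2, 2), (4, 6, 2, 2), (4, 4, 4, 2), (6, 4, 4, 2), (4, 6, 4, 2),
      (4, 4, 6, 2), (4, 2, 4, 6), (2, 4, 4, 6), (4, 4, 2, 6)] : List (ℕ × ℕ × ℕ × ℕ)))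
    (h1 : u + w = c + 2 * r1) (h2 : u + c = k + 2 * r2) :
    ∃ i j l, (j + l < r1 ∨ i + (j + l - r1) - r2 = 0) ∧
      (i + l < r1 ∨ j + (i + l - r1) - r2 = 0) ∧
      TT u w r1 j l * TT u c r2 i (j + l - r1) ≠ TT u w r1 i l * TT u c r2 j (i + l - r1) := by
  simp only [List.mem_cons, Prod.mk.injEq, List.not_mem_nil, or_false] at hmem
  rcases hmem with ⟨rfl, rfl, rfl, rfl⟩ | ⟨rfl, rfl, rfl, rfl⟩ | ⟨rfl, rfl, rfl, rfl⟩ |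
    ⟨rfl, rfl, rfl, rfl⟩ | ⟨rfl, rfl, rfl, rfl⟩ | ⟨rfl, rfl, rfl, rfl⟩ | ⟨rfl, rfl, rfl, rfl⟩ |
    ⟨rfl, rfl, rfl, rfl⟩ | ⟨rfl, rfl, rfl, rfl⟩
  · obtain ⟨rfl, rfl⟩ : r1 = 3 ∧ r2 = 2 := by omega
    exact ⟨1, 0, 4, by decide, by decide, by norm_num [TT, gam]⟩
  · obtain ⟨rfl, rfl⟩ : r1 = 4 ∧ r2 = 2 := by omega
    exact ⟨1, 0, 5, by decide, by decide, by norm_num [TT, gam]⟩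
  · obtain ⟨rfl, rfl⟩ : r1 = 2 ∧ r2 = 3 := by omega
    exact ⟨1, 0, 4, by decide, by decide, by norm_num [TT, gam]⟩
  · obtain ⟨rfl, rfl⟩ : r1 = 3 ∧ r2 = 4 := by omega
    exact ⟨2, 1, 4, by decide, by decide, by norm_num [TT, gam]⟩
  · obtain ⟨rfl, rfl⟩ : r1 = 3 ∧ r2 = 3 := by omega
    exact ⟨1, 0, 5, by decide, by decide, by norm_num [TT, gam]⟩
  · obtain ⟨rfl, rfl⟩ : r1 = 1 ∧ r2 = 4 := by omega
    exact ⟨1, 0, 4, by decide, by decide, by norm_num [TT, gam]⟩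
  · obtain ⟨rfl, rfl⟩ : r1 = 1 ∧ r2 = 1 := by omega
    exact ⟨1, 0, 1, by decide, by decide, by norm_num [TT, gam]⟩
  · obtain ⟨rfl, rfl⟩ : r1 = 1 ∧ r2 = 0 := by omega
    exact ⟨1, 0, 0, by decide, by decide, by norm_num [TT, gam]⟩
  · obtain ⟨rfl, rfl⟩ : r1 = 3 ∧ r2 = 0 := by omega
    exact ⟨1, 0, 2, by decide, by decide, by norm_num [TT, gam]⟩

theorem TTbad3 {n p k r1 r2 : ℕ}
    (hmem : (n = 4 ∧ p = 2 ∧ k = 2) ∨ (n = 4 ∧ p = 6 ∧ k = 2) ∨ (n = 4 ∧ p = 2 ∧ k = 6))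
    (h1 : n + n = p + 2 * r1) (h2 : n + p = k + 2 * r2) :
    ∃ i j l, (j + l < r1 ∨ i + (j + l - r1) - r2 = 0) ∧
      (l + i < r1 ∨ j + (l + i - r1) - r2 = 0) ∧
      (i + j < r1 ∨ l + (i + j - r1) - r2 = 0) ∧
      TT n n r1 j l * TT n p r2 i (j + l - r1) + TT n n r1 l i * TT n p r2 j (l + i - r1) +
      TT n n r1 i j * TT n p r2 l (i + j - r1) ≠ 0 := by
  rcases hmem with ⟨rfl, rfl, rfl⟩ | ⟨rfl, rfl, rfl⟩ | ⟨rfl, rfl, rfl⟩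
  · obtain ⟨rfl, rfl⟩ : r1 = 3 ∧ r2 = 2 := by omega
    exact ⟨3, 2, 0, by decide, by decide, by decide, by norm_num [TT, gam]⟩
  · obtain ⟨rfl, rfl⟩ : r1 = 1 ∧ r2 = 4 := by omega
    exact ⟨3, 2, 0, by decide, by decide, by decide, by norm_num [TT, gam]⟩
  · obtain ⟨rfl, rfl⟩ : r1 = 3 ∧ r2 = 0 := by omega
    exact ⟨2, 1, 0, by decide, by decide, by decide, by norm_num [TT, gam]⟩

section
variable {g : Type*} [LieRing g] [LieAlgebra ℂ g]
variable {s : LieSubalgebra ℂ g} {V : Fin 4 → Submodule ℂ g} {π : Fin 4 → g →ₗ[ℂ] g}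
  {e f h : g} {N : Fin 4 → ℕ} {v : Fin 4 → ℕ → g}

theorem Ctx.br (C : Ctx s V π e f h N v) {i j q : Fin 4} (hR : RR V i j q) :
    ∃ (r : ℕ) (c : ℂ), N i + N j = N q + 2 * r ∧ r ≤ N i ∧ r ≤ N j ∧ c ≠ 0 ∧
      ∀ k l, ⁅v i k, v j l⁆ = (c * (TT (N i) (N j) r k l : ℂ)) • v q (k + l - r) := by
  refine bracket_formula (C.std i) (C.std j) (C.std q) ?_ ?_
  · intro k l
    rw [C.spn q]
    exact hR.mem (C.vmem i k) (C.vmem j l)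
  · by_contra hc
    push Not at hc
    obtain ⟨x, hx, y, hy, hxy⟩ := hR.exists_ne (C.dec.1 q).1
    apply hxy
    rw [← C.spn i] at hx
    rw [← C.spn j] at hy
    induction hx using Submodule.span_induction with
    | mem x hx =>
      obtain ⟨k, rfl⟩ := hx
      clear hxy
      induction hy using Submodule.span_induction with
      | mem y hy => obtain ⟨l, rfl⟩ := hy; exact hc k l
      | zero => simp
      | add a b _ _ ha hb => rw [lie_add, ha, hb, add_zero]
      | smul t a _ ha => rw [lie_smul, ha, smul_zero]
    | zero => simp
    | add a b _ _ ha hb =>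
      rw [add_lie]
      by_cases h1 : ⁅a, y⁆ = 0
      · by_cases h2 : ⁅b, y⁆ = 0
        · rw [h1, h2, add_zero]
        · exact absurd (hb h2) h2
      · exact absurd (ha h1) h1
    | smul t a _ ha =>
      rw [smul_lie]
      by_cases h1 : ⁅a, y⁆ = 0
      · rw [h1, smul_zero]
      · exact absurd (ha h1) h1

theorem Ctx.br_self (C : Ctx s V π e f h N v) {i q : Fin 4} (hR : RR V i i q) :
    ∃ (r : ℕ) (c : ℂ), N i + N i = N q + 2 * r ∧ r % 2 = 1 ∧ c ≠ 0 ∧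
      ∀ k l, ⁅v i k, v i l⁆ = (c * (TT (N i) (N i) r k l : ℂ)) • v q (k + l - r) := by
  obtain ⟨r, c, h1, -, -, h4, h5⟩ := C.br hR
  exact ⟨r, c, h1, bracket_odd (C.std q) h4 h5, h4, h5⟩

theorem Ctx.step (C : Ctx s V π e f h N v) {u w c q : Fin 4} {r1 r2 : ℕ} {c1 c2 : ℂ}
    (b1 : ∀ k l, ⁅v u k, v w l⁆ = (c1 * (TT (N u) (N w) r1 k l : ℂ)) • v c (k + l - r1))
    (b2 : ∀ k l, ⁅v u k, v c l⁆ = (c2 * (TT (N u) (N c) r2 k l : ℂ)) • v q (k + l - r2))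
    {i j l : ℕ} (h : j + l < r1 ∨ i + (j + l - r1) - r2 = 0) :
    ⁅v u i, ⁅v u j, v w l⁆⁆ = (c1 * c2 * ((TT (N u) (N w) r1 j l *
      TT (N u) (N c) r2 i (j + l - r1) : ℚ) : ℂ)) • v q 0 := by
  rw [b1, lie_smul, b2, smul_smul]
  rcases h with h | h
  · rw [TT_lt _ _ _ _ _ h]; simp
  · rw [h]; push_cast; congr 1; ring

theorem Ctx.kill_sym (C : Ctx s V π e f h N v) {u w c q : Fin 4} (h1 : RR V u w c)
    (h2 : RR V u c q) (hz : ∀ y ∈ V u, ∀ z ∈ V u, ∀ x ∈ V w, ⁅⁅y, z⁆, x⁆ = 0)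
    (hmem : (N u, N w, N c, N q) ∈ ([(4, 4, 2, 2), (4, 6, 2, 2), (4, 4, 4, 2), (6, 4, 4, 2),
      (4, 6, 4, 2), (4, 4, 6, 2), (4, 2, 4, 6), (2, 4, 4, 6), (4, 4, 2, 6)] :
      List (ℕ × ℕ × ℕ × ℕ))) : False := by
  obtain ⟨r1, c1, e1, -, -, n1, b1⟩ := C.br h1
  obtain ⟨r2, c2, e2, -, -, n2, b2⟩ := C.br h2
  obtain ⟨i, j, l, p1, p2, hne⟩ := TTbad hmem e1 e2
  have hj := leibniz_lie (v u i) (v u j) (v w l)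
  rw [hz _ (C.vmem u i) _ (C.vmem u j) _ (C.vmem w l), zero_add, C.step b1 b2 p1,
    C.step b1 b2 p2] at hj
  have h3 := smul_left_injective ℂ ((C.std q).ne 0 (Nat.zero_le _)) hj
  have h4 := mul_left_cancel₀ (mul_ne_zero n1 n2) h3
  exact hne (by exact_mod_cast h4)

theorem Ctx.kill_aaa (C : Ctx s V π e f h N v) {a c q : Fin 4} (h1 : RR V a a c)
    (h2 : RR V a c q)
    (hmem : (N a = 4 ∧ N c = 2 ∧ N q = 2) ∨ (N a = 4 ∧ N c = 6 ∧ N q = 2) ∨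
      (N a = 4 ∧ N c = 2 ∧ N q = 6)) : False := by
  obtain ⟨r1, c1, e1, -, -, n1, b1⟩ := C.br h1
  obtain ⟨r2, c2, e2, -, -, n2, b2⟩ := C.br h2
  obtain ⟨i, j, l, p1, p2, p3, hne⟩ := TTbad3 hmem e1 e2
  have hj := lie_jacobi (v a i) (v a j) (v a l)
  rw [C.step b1 b2 p1, C.step b1 b2 p2, C.step b1 b2 p3, ← add_smul, ← add_smul, ← mul_add,
    ← mul_add] at hj
  have h3 := (smul_eq_zero.1 hj).resolve_right ((C.std q).ne 0 (Nat.zero_le _))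
  have h4 := (mul_eq_zero.1 h3).resolve_left (mul_ne_zero n1 n2)
  exact hne (by exact_mod_cast h4)
end
end Symp18

namespace Symp18
section
variable {g : Type*} [LieRing g] [LieAlgebra ℂ g]
variable {s : LieSubalgebra ℂ g} {V : Fin 4 → Submodule ℂ g} {π : Fin 4 → g →ₗ[ℂ] g}
  {e f h : g} {N : Fin 4 → ℕ} {v : Fin 4 → ℕ → g}

theorem sub1 : ∀ x ∈ ([(4, 4, 2, 2), (4, 4, 4, 2), (6, 4, 4, 2), (4, 6, 4, 2), (4, 4, 6, 2), (4, 2, 4, 6), (4, 4, 2, 6)] : List (ℕ × ℕ × ℕ × ℕ)),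
    x ∈ ([(4, 4, 2, 2), (4, 6, 2, 2), (4, 4, 4, 2), (6, 4, 4, 2),
      (4, 6, 4, 2), (4, 4, 6, 2), (4, 2, 4, 6), (2, 4, 4, 6), (4, 4, 2, 6)] :
      List (ℕ × ℕ × ℕ × ℕ)) := by
  decide

theorem sub2 : ∀ x ∈ ([(4, 4, 2, 2), (4, 6, 2, 2), (4, 4, 4, 2), (6, 4, 4, 2), (4, 6, 4, 2), (4, 4, 6, 2),
      (2, 4, 4, 6), (4, 4, 2, 6)] : List (ℕ × ℕ × ℕ × ℕ)),
    x ∈ ([(4, 4, 2, 2), (4, 6, 2, 2), (4, 4, 4, 2), (6, 4, 4, 2),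
      (4, 6, 4, 2), (4, 4, 6, 2), (4, 2, 4, 6), (2, 4, 4, 6), (4, 4, 2, 6)] :
      List (ℕ × ℕ × ℕ × ℕ)) := by
  decide

theorem sum_perm (N : Fin 4 → ℕ) {a b c : Fin 4}
    (hd : a ≠ b ∧ a ≠ c ∧ b ≠ c ∧ a ≠ 3 ∧ b ≠ 3 ∧ c ≠ 3) :
    ∑ i, N i = N a + N b + N c + N 3 := by
  have : (Finset.univ : Finset (Fin 4)) = {a, b, c, 3} := by
    ext i
    simpa using cover hd i
  obtain ⟨h1, h2, h3, h4, h5, h6⟩ := hd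
  rw [this, Finset.sum_insert (by simp [*]), Finset.sum_insert (by simp [*]),
    Finset.sum_insert (by simp [*]), Finset.sum_singleton]
  ring

theorem Ctx.zero3 (C : Ctx s V π e f h N v) {x y : g} (hx : x ∈ V 3) (i : Fin 4) (hy : y ∈ V i) :
    ⁅x, y⁆ = 0 :=
  zero_of C.conv (RR_cent C.dec C.cenrad i) hx hy

theorem Ctx.final (C : Ctx s V π e f h N v) (hperf : Symp.IsPerfectLie g)
    (hD : ∀ D : LieDerivation ℂ g g, Symp.IsInnerDer D)
    (hsum : ∑ i, N i ≤ 17) {a b c : Fin 4} (ho : Outcome (RR V) a b c) : False := by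
  obtain ⟨hd, ha, ⟨w, hw, hw2⟩ | ⟨hb, hbb, hac, hcase⟩⟩ := ho
  · exact C.grading hD w hw2 a ha hw
  have hs : N a + N b + N c + N 3 ≤ 17 := (sum_perm N hd) ▸ hsum
  have hb0 := C.gen_pos hperf hb
  have hmk := C.central_b hperf hD hd (cover hd) ha hb hac
  have hnk : N c ≠ 0 → N a ≠ N 3 := C.central_a hperf hD hd (cover hd) ha hb
  obtain ⟨r0, _, b1, b3, -, -⟩ := C.br_self hbb
  obtain ⟨r3, _, c1, c2, c3, -, -⟩ := C.br hac
  rcases hcase with ⟨hab, hbc⟩ | ⟨hab, hbc, haa⟩ | ⟨haa, hab⟩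
  · obtain ⟨r1, _, d1, d2, d3, -, -⟩ := C.br hab
    obtain ⟨r2, _, e1, e2, e3, -, -⟩ := C.br hbc
    have hl := num1 hs hb0 hmk hnk b1 b3 c1 c2 c3 d1 d2 d3 e1 e2 e3
    refine C.kill_sym hab.symm hbc
      (fun y hy z hz x hx => C.zero3 (hbb.mem hy hz) a hx) ?_
    exact sub1 _ hl
  · obtain ⟨r1, _, d1, d2, d3, -, -⟩ := C.br hab
    have ev : N a % 2 = 0 := by
      have hpc : N c % 2 = N 3 % 2 → N a % 2 = 0 := by omega
      rcases haa with haa | haa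
      · obtain ⟨r, _, f1, f2, -, -⟩ := C.br_self haa
        omega
      · obtain ⟨r, _, f1, f2, -, -⟩ := C.br_self haa
        omega
    have hl := num2 hs hb0 hmk hnk b1 b3 c1 c2 c3 d1 d2 d3 ev
    refine C.kill_sym hab hac (fun y hy z hz x hx => ?_) ?_
    · rcases haa with haa | haa
      · rw [← lie_skew, zero_of C.conv hbc hx (haa.mem hy hz), neg_zero]
      · exact C.zero3 (haa.mem hy hz) b hx
    · exact sub2 _ hl
  · obtain ⟨r1, _, d1, d3, -, -⟩ := C.br_self haa
    obtain ⟨r2, _, e1, e2, e3, -, -⟩ := C.br hab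
    exact C.kill_aaa haa hac (num3 hs hb0 hmk hnk b1 b3 c1 c2 c3 d1 d3 e1 e2 e3)

end
end Symp18

/-- a perfect centreless Lie algebra with Levi subalgebra `sl₂(ℂ)`, radical
decomposing into 4 simple modules satisfying the convention with `Z(h) = V_k` (here `V 3`),
and dimension < 25 is not sympathetic. -/
theorem stmt18 (g : Type*) [LieRing g] [LieAlgebra ℂ g] [FiniteDimensional ℂ g]
    (hperf : Symp.IsPerfectLie g)
    (hZg : LieAlgebra.center ℂ g = ⊥)
    (s : LieSubalgebra ℂ g) (hs : Symp.IsSl2Levi g s)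
    (V : Fin 4 → Submodule ℂ g) (hdec : Symp.IsDecomp g s V)
    (hconv : Symp.Convention g V)
    (hZ : Symp.centerRad g = V 3)
    (hdim : Module.finrank ℂ g < 25) :
    ¬ Symp.IsSympathetic g := by
  rintro ⟨-, -, hD⟩
  obtain ⟨φ⟩ := hs.1
  obtain ⟨e, f, h, t, gen, h3⟩ := Symp18.sl2_triple s φ
  choose N v std spn using fun i => Symp18.exists_stdSeq s t gen (V i) (hdec.1 i)
  obtain ⟨π, P⟩ := Symp18.exists_proj s hs V hdec
  have C : Symp18.Ctx s V π (e : g) f h N v :=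
    { P := P, std := std, spn := spn, fmem := f.2
      gen := by
        intro x hx
        obtain ⟨a, b, c, hh⟩ := gen ⟨x, hx⟩
        exact ⟨a, b, c, by simpa using congrArg Subtype.val hh⟩
      cen := Symp18.triple_cen t gen
      dec := hdec, conv := hconv, cenrad := hZ }
  have hsum : ∑ i, N i ≤ 17 := by
    have h1 := P.finrank_le
    have h2 : ∀ i, Module.finrank ℂ (V i) = N i + 1 := fun i => by
      rw [← spn i]; exact (std i).finrank
    simp only [h2, Finset.sum_add_distrib, Finset.sum_const, Finset.card_univ, Fintype.card_fin,
      smul_eq_mul, mul_one] at h1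
    omega
  obtain ⟨a, b, c, ho⟩ := Symp18.comb (R := Symp18.RR V) (fun _ _ _ h => h.symm)
    (fun i j q q' h1 h2 => P.index_unique (hdec.1 q).1 (le_of_eq (Eq.trans (Eq.symm h1) h2)))
    (Symp18.RR_cent hdec hZ) (Symp18.RR_nonc P hdec hconv hZ) (Symp18.RR_jac P hdec hconv)
    (Symp18.RR_nak P hperf hs hdec hconv)
  exact C.final hperf hD hsum ho
end

section
/- There exists a complex Lie algebra g of dimension 25 that is sympathetic but not semisimple; that is, Z(g) = 0, [g,g] = g, every derivation of g is inner, and the radical of g is nonzero. -/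
namespace Construction

/-- The underlying space (with its own bracket, below): coordinates 0-2 are `sl₂` (`e, h, f`), 3-7 the module `Y = V(4)`,
8-14 the module `P = V(6)`, 15-21 the module `Q = V(6)`, 22-24 the module `X = V(2)`. -/
def G : Type := Fin 25 → ℂ

instance : AddCommGroup G := inferInstanceAs (AddCommGroup (Fin 25 → ℂ))

noncomputable instance : Module ℂ G := inferInstanceAs (Module ℂ (Fin 25 → ℂ))

/-- The bracket: the module action of `sl₂` on binary forms, and transvectants
`Y × Y → X`, `Y × P → X`, `P × P → Q`, `P × Q → X`. -/
noncomputable def br (x y : Fin 25 → ℂ) : Fin 25 → ℂ :=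
  ![
    -2 * (x 0 * y 1 - x 1 * y 0),
    1 * (x 0 * y 2 - x 2 * y 0),
    -2 * (x 1 * y 2 - x 2 * y 1),
    1 * (x 0 * y 4 - x 4 * y 0) + 4 * (x 1 * y 3 - x 3 * y 1),
    2 * (x 0 * y 5 - x 5 * y 0) + 2 * (x 1 * y 4 - x 4 * y 1) + 4 * (x 2 * y 3 - x 3 * y 2),
    3 * (x 0 * y 6 - x 6 * y 0) + 3 * (x 2 * y 4 - x 4 * y 2),
    4 * (x 0 * y 7 - x 7 * y 0) - 2 * (x 1 * y 6 - x 6 * y 1) + 2 * (x 2 * y 5 - x 5 * y 2),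
    -4 * (x 1 * y 7 - x 7 * y 1) + 1 * (x 2 * y 6 - x 6 * y 2),
    1 * (x 0 * y 9 - x 9 * y 0) + 6 * (x 1 * y 8 - x 8 * y 1),
    2 * (x 0 * y 10 - x 10 * y 0) + 4 * (x 1 * y 9 - x 9 * y 1) + 6 * (x 2 * y 8 - x 8 * y 2),
    3 * (x 0 * y 11 - x 11 * y 0) + 2 * (x 1 * y 10 - x 10 * y 1) + 5 * (x 2 * y 9 - x 9 * y 2),
    4 * (x 0 * y 12 - x 12 * y 0) + 4 * (x 2 * y 10 - x 10 * y 2),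
    5 * (x 0 * y 13 - x 13 * y 0) - 2 * (x 1 * y 12 - x 12 * y 1) + 3 * (x 2 * y 11 - x 11 * y 2),
    6 * (x 0 * y 14 - x 14 * y 0) - 4 * (x 1 * y 13 - x 13 * y 1) + 2 * (x 2 * y 12 - x 12 * y 2),
    -6 * (x 1 * y 14 - x 14 * y 1) + 1 * (x 2 * y 13 - x 13 * y 2),
    1 * (x 0 * y 16 - x 16 * y 0) + 6 * (x 1 * y 15 - x 15 * y 1) + 3 * (x 8 * y 11 - x 11 * y 8)
      - 2 * (x 9 * y 10 - x 10 * y 9),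
    2 * (x 0 * y 17 - x 17 * y 0) + 4 * (x 1 * y 16 - x 16 * y 1) + 6 * (x 2 * y 15 - x 15 * y 2)
      + 12 * (x 8 * y 12 - x 12 * y 8) - 3 * (x 9 * y 11 - x 11 * y 9),
    3 * (x 0 * y 18 - x 18 * y 0) + 2 * (x 1 * y 17 - x 17 * y 1) + 5 * (x 2 * y 16 - x 16 * y 2)
      + 30 * (x 8 * y 13 - x 13 * y 8) - 3 * (x 10 * y 11 - x 11 * y 10),
    4 * (x 0 * y 19 - x 19 * y 0) + 4 * (x 2 * y 17 - x 17 * y 2) + 60 * (x 8 * y 14 - x 14 * y 8)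
      + 10 * (x 9 * y 13 - x 13 * y 9) - 4 * (x 10 * y 12 - x 12 * y 10),
    5 * (x 0 * y 20 - x 20 * y 0) - 2 * (x 1 * y 19 - x 19 * y 1) + 3 * (x 2 * y 18 - x 18 * y 2)
      + 30 * (x 9 * y 14 - x 14 * y 9) - 3 * (x 11 * y 12 - x 12 * y 11),
    6 * (x 0 * y 21 - x 21 * y 0) - 4 * (x 1 * y 20 - x 20 * y 1) + 2 * (x 2 * y 19 - x 19 * y 2)
      + 12 * (x 10 * y 14 - x 14 * y 10) - 3 * (x 11 * y 13 - x 13 * y 11),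
    -6 * (x 1 * y 21 - x 21 * y 1) + 1 * (x 2 * y 20 - x 20 * y 2) + 3 * (x 11 * y 14 - x 14 * y 11)
      - 2 * (x 12 * y 13 - x 13 * y 12),
    1 * (x 0 * y 23 - x 23 * y 0) + 2 * (x 1 * y 22 - x 22 * y 1) + 2 * (x 3 * y 6 - x 6 * y 3)
      + 4 * (x 3 * y 12 - x 12 * y 3) - 1 * (x 4 * y 5 - x 5 * y 4) - 3 * (x 4 * y 11 - x 11 * y 4)
      + 4 * (x 5 * y 10 - x 10 * y 5) - 10 * (x 6 * y 9 - x 9 * y 6) + 60 * (x 7 * y 8 - x 8 * y 7)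
      + 15 * (x 8 * y 20 - x 20 * y 8) - 5 * (x 9 * y 19 - x 19 * y 9) + 3 * (x 10 * y 18 - x 18 * y 10)
      - 3 * (x 11 * y 17 - x 17 * y 11) + 5 * (x 12 * y 16 - x 16 * y 12) - 15 * (x 13 * y 15 - x 15 * y 13),
    2 * (x 0 * y 24 - x 24 * y 0) + 2 * (x 2 * y 22 - x 22 * y 2) + 8 * (x 3 * y 7 - x 7 * y 3)
      + 20 * (x 3 * y 13 - x 13 * y 3) - 1 * (x 4 * y 6 - x 6 * y 4) - 8 * (x 4 * y 12 - x 12 * y 4)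
      + 6 * (x 5 * y 11 - x 11 * y 5) - 8 * (x 6 * y 10 - x 10 * y 6) + 20 * (x 7 * y 9 - x 9 * y 7)
      + 90 * (x 8 * y 21 - x 21 * y 8) - 10 * (x 9 * y 20 - x 20 * y 9) + 2 * (x 10 * y 19 - x 19 * y 10)
      - 2 * (x 12 * y 17 - x 17 * y 12) + 10 * (x 13 * y 16 - x 16 * y 13) - 90 * (x 14 * y 15 - x 15 * y 14),
    -2 * (x 1 * y 24 - x 24 * y 1) + 1 * (x 2 * y 23 - x 23 * y 2) + 60 * (x 3 * y 14 - x 14 * y 3)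
      + 2 * (x 4 * y 7 - x 7 * y 4) - 10 * (x 4 * y 13 - x 13 * y 4) - 1 * (x 5 * y 6 - x 6 * y 5)
      + 4 * (x 5 * y 12 - x 12 * y 5) - 3 * (x 6 * y 11 - x 11 * y 6) + 4 * (x 7 * y 10 - x 10 * y 7)
      + 15 * (x 9 * y 21 - x 21 * y 9) - 5 * (x 10 * y 20 - x 20 * y 10) + 3 * (x 11 * y 19 - x 19 * y 11)
      - 3 * (x 12 * y 18 - x 18 * y 12) + 5 * (x 13 * y 17 - x 17 * y 13) - 15 * (x 14 * y 16 - x 16 * y 14)]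

theorem forall_fin {p : Fin 25 → Prop}
    (h0 : p 0)
    (h1 : p 1)
    (h2 : p 2)
    (h3 : p 3)
    (h4 : p 4)
    (h5 : p 5)
    (h6 : p 6)
    (h7 : p 7)
    (h8 : p 8)
    (h9 : p 9)
    (h10 : p 10)
    (h11 : p 11)
    (h12 : p 12)
    (h13 : p 13)
    (h14 : p 14)
    (h15 : p 15)
    (h16 : p 16)
    (h17 : p 17)
    (h18 : p 18)
    (h19 : p 19)
    (h20 : p 20)
    (h21 : p 21)
    (h22 : p 22)
    (h23 : p 23)
    (h24 : p 24)
    (k : Fin 25) : p k := by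
  fin_cases k <;> assumption

theorem ext_fin {x y : Fin 25 → ℂ}
    (h0 : x 0 = y 0)
    (h1 : x 1 = y 1)
    (h2 : x 2 = y 2)
    (h3 : x 3 = y 3)
    (h4 : x 4 = y 4)
    (h5 : x 5 = y 5)
    (h6 : x 6 = y 6)
    (h7 : x 7 = y 7)
    (h8 : x 8 = y 8)
    (h9 : x 9 = y 9)
    (h10 : x 10 = y 10)
    (h11 : x 11 = y 11)
    (h12 : x 12 = y 12)
    (h13 : x 13 = y 13)
    (h14 : x 14 = y 14)
    (h15 : x 15 = y 15)
    (h16 : x 16 = y 16)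
    (h17 : x 17 = y 17)
    (h18 : x 18 = y 18)
    (h19 : x 19 = y 19)
    (h20 : x 20 = y 20)
    (h21 : x 21 = y 21)
    (h22 : x 22 = y 22)
    (h23 : x 23 = y 23)
    (h24 : x 24 = y 24)
    : x = y := by
  funext k
  fin_cases k <;> assumption

@[simp]
theorem br_0 (x y : Fin 25 → ℂ) : br x y 0 =
    -2 * (x 0 * y 1 - x 1 * y 0) := rfl

@[simp]
theorem br_1 (x y : Fin 25 → ℂ) : br x y 1 =
    1 * (x 0 * y 2 - x 2 * y 0) := rfl

@[simp]
theorem br_2 (x y : Fin 25 → ℂ) : br x y 2 =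
    -2 * (x 1 * y 2 - x 2 * y 1) := rfl

@[simp]
theorem br_3 (x y : Fin 25 → ℂ) : br x y 3 =
    1 * (x 0 * y 4 - x 4 * y 0) + 4 * (x 1 * y 3 - x 3 * y 1) := rfl

@[simp]
theorem br_4 (x y : Fin 25 → ℂ) : br x y 4 =
    2 * (x 0 * y 5 - x 5 * y 0) + 2 * (x 1 * y 4 - x 4 * y 1) + 4 * (x 2 * y 3 - x 3 * y 2) := rfl

@[simp]
theorem br_5 (x y : Fin 25 → ℂ) : br x y 5 =
    3 * (x 0 * y 6 - x 6 * y 0) + 3 * (x 2 * y 4 - x 4 * y 2) := rfl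

@[simp]
theorem br_6 (x y : Fin 25 → ℂ) : br x y 6 =
    4 * (x 0 * y 7 - x 7 * y 0) - 2 * (x 1 * y 6 - x 6 * y 1) + 2 * (x 2 * y 5 - x 5 * y 2) := rfl

@[simp]
theorem br_7 (x y : Fin 25 → ℂ) : br x y 7 =
    -4 * (x 1 * y 7 - x 7 * y 1) + 1 * (x 2 * y 6 - x 6 * y 2) := rfl

@[simp]
theorem br_8 (x y : Fin 25 → ℂ) : br x y 8 =
    1 * (x 0 * y 9 - x 9 * y 0) + 6 * (x 1 * y 8 - x 8 * y 1) := rfl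

@[simp]
theorem br_9 (x y : Fin 25 → ℂ) : br x y 9 =
    2 * (x 0 * y 10 - x 10 * y 0) + 4 * (x 1 * y 9 - x 9 * y 1) + 6 * (x 2 * y 8 - x 8 * y 2) := rfl

@[simp]
theorem br_10 (x y : Fin 25 → ℂ) : br x y 10 =
    3 * (x 0 * y 11 - x 11 * y 0) + 2 * (x 1 * y 10 - x 10 * y 1) + 5 * (x 2 * y 9 - x 9 * y 2) := rfl

@[simp]
theorem br_11 (x y : Fin 25 → ℂ) : br x y 11 =
    4 * (x 0 * y 12 - x 12 * y 0) + 4 * (x 2 * y 10 - x 10 * y 2) := rfl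

@[simp]
theorem br_12 (x y : Fin 25 → ℂ) : br x y 12 =
    5 * (x 0 * y 13 - x 13 * y 0) - 2 * (x 1 * y 12 - x 12 * y 1) + 3 * (x 2 * y 11 - x 11 * y 2) := rfl

@[simp]
theorem br_13 (x y : Fin 25 → ℂ) : br x y 13 =
    6 * (x 0 * y 14 - x 14 * y 0) - 4 * (x 1 * y 13 - x 13 * y 1) + 2 * (x 2 * y 12 - x 12 * y 2) := rfl

@[simp]
theorem br_14 (x y : Fin 25 → ℂ) : br x y 14 =
    -6 * (x 1 * y 14 - x 14 * y 1) + 1 * (x 2 * y 13 - x 13 * y 2) := rfl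

@[simp]
theorem br_15 (x y : Fin 25 → ℂ) : br x y 15 =
    1 * (x 0 * y 16 - x 16 * y 0) + 6 * (x 1 * y 15 - x 15 * y 1) + 3 * (x 8 * y 11 - x 11 * y 8)
      - 2 * (x 9 * y 10 - x 10 * y 9) := rfl

@[simp]
theorem br_16 (x y : Fin 25 → ℂ) : br x y 16 =
    2 * (x 0 * y 17 - x 17 * y 0) + 4 * (x 1 * y 16 - x 16 * y 1) + 6 * (x 2 * y 15 - x 15 * y 2)
      + 12 * (x 8 * y 12 - x 12 * y 8) - 3 * (x 9 * y 11 - x 11 * y 9) := rfl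

@[simp]
theorem br_17 (x y : Fin 25 → ℂ) : br x y 17 =
    3 * (x 0 * y 18 - x 18 * y 0) + 2 * (x 1 * y 17 - x 17 * y 1) + 5 * (x 2 * y 16 - x 16 * y 2)
      + 30 * (x 8 * y 13 - x 13 * y 8) - 3 * (x 10 * y 11 - x 11 * y 10) := rfl

@[simp]
theorem br_18 (x y : Fin 25 → ℂ) : br x y 18 =
    4 * (x 0 * y 19 - x 19 * y 0) + 4 * (x 2 * y 17 - x 17 * y 2) + 60 * (x 8 * y 14 - x 14 * y 8)
      + 10 * (x 9 * y 13 - x 13 * y 9) - 4 * (x 10 * y 12 - x 12 * y 10) := rfl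

@[simp]
theorem br_19 (x y : Fin 25 → ℂ) : br x y 19 =
    5 * (x 0 * y 20 - x 20 * y 0) - 2 * (x 1 * y 19 - x 19 * y 1) + 3 * (x 2 * y 18 - x 18 * y 2)
      + 30 * (x 9 * y 14 - x 14 * y 9) - 3 * (x 11 * y 12 - x 12 * y 11) := rfl

@[simp]
theorem br_20 (x y : Fin 25 → ℂ) : br x y 20 =
    6 * (x 0 * y 21 - x 21 * y 0) - 4 * (x 1 * y 20 - x 20 * y 1) + 2 * (x 2 * y 19 - x 19 * y 2)
      + 12 * (x 10 * y 14 - x 14 * y 10) - 3 * (x 11 * y 13 - x 13 * y 11) := rfl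

@[simp]
theorem br_21 (x y : Fin 25 → ℂ) : br x y 21 =
    -6 * (x 1 * y 21 - x 21 * y 1) + 1 * (x 2 * y 20 - x 20 * y 2) + 3 * (x 11 * y 14 - x 14 * y 11)
      - 2 * (x 12 * y 13 - x 13 * y 12) := rfl

@[simp]
theorem br_22 (x y : Fin 25 → ℂ) : br x y 22 =
    1 * (x 0 * y 23 - x 23 * y 0) + 2 * (x 1 * y 22 - x 22 * y 1) + 2 * (x 3 * y 6 - x 6 * y 3)
      + 4 * (x 3 * y 12 - x 12 * y 3) - 1 * (x 4 * y 5 - x 5 * y 4) - 3 * (x 4 * y 11 - x 11 * y 4)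
      + 4 * (x 5 * y 10 - x 10 * y 5) - 10 * (x 6 * y 9 - x 9 * y 6) + 60 * (x 7 * y 8 - x 8 * y 7)
      + 15 * (x 8 * y 20 - x 20 * y 8) - 5 * (x 9 * y 19 - x 19 * y 9) + 3 * (x 10 * y 18 - x 18 * y 10)
      - 3 * (x 11 * y 17 - x 17 * y 11) + 5 * (x 12 * y 16 - x 16 * y 12) - 15 * (x 13 * y 15 - x 15 * y 13) := rfl

@[simp]
theorem br_23 (x y : Fin 25 → ℂ) : br x y 23 =
    2 * (x 0 * y 24 - x 24 * y 0) + 2 * (x 2 * y 22 - x 22 * y 2) + 8 * (x 3 * y 7 - x 7 * y 3)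
      + 20 * (x 3 * y 13 - x 13 * y 3) - 1 * (x 4 * y 6 - x 6 * y 4) - 8 * (x 4 * y 12 - x 12 * y 4)
      + 6 * (x 5 * y 11 - x 11 * y 5) - 8 * (x 6 * y 10 - x 10 * y 6) + 20 * (x 7 * y 9 - x 9 * y 7)
      + 90 * (x 8 * y 21 - x 21 * y 8) - 10 * (x 9 * y 20 - x 20 * y 9) + 2 * (x 10 * y 19 - x 19 * y 10)
      - 2 * (x 12 * y 17 - x 17 * y 12) + 10 * (x 13 * y 16 - x 16 * y 13) - 90 * (x 14 * y 15 - x 15 * y 14) := rfl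

@[simp]
theorem br_24 (x y : Fin 25 → ℂ) : br x y 24 =
    -2 * (x 1 * y 24 - x 24 * y 1) + 1 * (x 2 * y 23 - x 23 * y 2) + 60 * (x 3 * y 14 - x 14 * y 3)
      + 2 * (x 4 * y 7 - x 7 * y 4) - 10 * (x 4 * y 13 - x 13 * y 4) - 1 * (x 5 * y 6 - x 6 * y 5)
      + 4 * (x 5 * y 12 - x 12 * y 5) - 3 * (x 6 * y 11 - x 11 * y 6) + 4 * (x 7 * y 10 - x 10 * y 7)
      + 15 * (x 9 * y 21 - x 21 * y 9) - 5 * (x 10 * y 20 - x 20 * y 10) + 3 * (x 11 * y 19 - x 19 * y 11)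
      - 3 * (x 12 * y 18 - x 18 * y 12) + 5 * (x 13 * y 17 - x 17 * y 13) - 15 * (x 14 * y 16 - x 16 * y 14) := rfl

theorem br_add_left (x y z : Fin 25 → ℂ) : (br (x + y) z) = (br x z) + (br y z) := by
  apply ext_fin <;>
  · simp only [Pi.add_apply, br_0, br_1, br_2, br_3, br_4, br_5, br_6, br_7, br_8, br_9, br_10, br_11, br_12, br_13, br_14, br_15, br_16, br_17, br_18, br_19, br_20, br_21, br_22, br_23, br_24]
    ring

theorem br_smul_left (c : ℂ) (x z : Fin 25 → ℂ) : (br (c • x) z) = c • (br x z) := by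
  apply ext_fin <;>
  · simp only [Pi.smul_apply, smul_eq_mul, br_0, br_1, br_2, br_3, br_4, br_5, br_6, br_7, br_8, br_9, br_10, br_11, br_12, br_13, br_14, br_15, br_16, br_17, br_18, br_19, br_20, br_21, br_22, br_23, br_24]
    ring

theorem br_add_right (x y z : Fin 25 → ℂ) : (br x (y + z)) = (br x y) + (br x z) := by
  apply ext_fin <;>
  · simp only [Pi.add_apply, br_0, br_1, br_2, br_3, br_4, br_5, br_6, br_7, br_8, br_9, br_10, br_11, br_12, br_13, br_14, br_15, br_16, br_17, br_18, br_19, br_20, br_21, br_22, br_23, br_24]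
    ring

theorem br_smul_right (c : ℂ) (x z : Fin 25 → ℂ) : (br x (c • z)) = c • (br x z) := by
  apply ext_fin <;>
  · simp only [Pi.smul_apply, smul_eq_mul, br_0, br_1, br_2, br_3, br_4, br_5, br_6, br_7, br_8, br_9, br_10, br_11, br_12, br_13, br_14, br_15, br_16, br_17, br_18, br_19, br_20, br_21, br_22, br_23, br_24]
    ring

theorem br_self (x : Fin 25 → ℂ) : (br x x) = 0 := by
  apply ext_fin <;>
  · simp only [Pi.zero_apply, br_0, br_1, br_2, br_3, br_4, br_5, br_6, br_7, br_8, br_9, br_10, br_11, br_12, br_13, br_14, br_15, br_16, br_17, br_18, br_19, br_20, br_21, br_22, br_23, br_24]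
    ring

theorem br_jacobi (x y z : Fin 25 → ℂ) :
    (br x (br y z)) = (br (br x y) z) + (br y (br x z)) := by
  apply ext_fin <;>
  · simp only [Pi.add_apply, br_0, br_1, br_2, br_3, br_4, br_5, br_6, br_7, br_8, br_9, br_10, br_11, br_12, br_13, br_14, br_15, br_16, br_17, br_18, br_19, br_20, br_21, br_22, br_23, br_24]
    ring

/-- The standard basis. -/
noncomputable def b (i : Fin 25) : Fin 25 → ℂ := fun j => if j = i then 1 else 0

theorem b_apply (i j : Fin 25) : b i j = if j = i then 1 else 0 := rfl

theorem br_e (y : Fin 25 → ℂ) : br (b 0) y =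
    ![(-2) * y 1, (1) * y 2, 0, (1) * y 4, (2) * y 5, (3) * y 6, (4) * y 7, 0, (1) * y 9, (2) * y 10, (3) * y 11, (4) * y 12, (5) * y 13, (6) * y 14, 0, (1) * y 16, (2) * y 17, (3) * y 18, (4) * y 19, (5) * y 20, (6) * y 21, 0, (1) * y 23, (2) * y 24, 0] := by
  apply ext_fin <;>
  · simp [b_apply]
    try ring

theorem br_h (y : Fin 25 → ℂ) : br (b 1) y =
    ![(2) * y 0, (0) * y 1, (-2) * y 2, (4) * y 3, (2) * y 4, (0) * y 5, (-2) * y 6, (-4) * y 7, (6) * y 8, (4) * y 9, (2) * y 10, (0) * y 11, (-2) * y 12, (-4) * y 13, (-6) * y 14, (6) * y 15, (4) * y 16, (2) * y 17, (0) * y 18, (-2) * y 19, (-4) * y 20, (-6) * y 21, (2) * y 22, (0) * y 23, (-2) * y 24] := by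
  apply ext_fin <;>
  · simp [b_apply]
    try ring

theorem br_f (y : Fin 25 → ℂ) : br (b 2) y =
    ![0, (-1) * y 0, (2) * y 1, 0, (4) * y 3, (3) * y 4, (2) * y 5, (1) * y 6, 0, (6) * y 8, (5) * y 9, (4) * y 10, (3) * y 11, (2) * y 12, (1) * y 13, 0, (6) * y 15, (5) * y 16, (4) * y 17, (3) * y 18, (2) * y 19, (1) * y 20, 0, (2) * y 22, (1) * y 23] := by
  apply ext_fin <;>
  · simp [b_apply]
    try ring

theorem br_skew (x y : Fin 25 → ℂ) : br x y = -(br y x) := by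
  have h := br_self (x + y)
  rw [br_add_left, br_add_right, br_add_right, br_self, br_self, zero_add, add_zero] at h
  exact eq_neg_of_add_eq_zero_left h

theorem br_sub_left (x y z : Fin 25 → ℂ) : br (x - y) z = br x z - br y z := by
  rw [eq_sub_iff_add_eq, ← br_add_left, sub_add_cancel]

theorem br_sub_right (x y z : Fin 25 → ℂ) : br x (y - z) = br x y - br x z := by
  rw [eq_sub_iff_add_eq, ← br_add_right, sub_add_cancel]

theorem sum_b (v : Fin 25 → ℂ) : v = ∑ i, v i • b i := by
  funext j
  simp [Finset.sum_apply, b_apply]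

theorem bb_1_0 : br (b 1) (b 0) = (2 : ℂ) • b 0 := by
  rw [br_h]
  apply ext_fin <;>
    simp [b_apply]

theorem bb_1_2 : br (b 1) (b 2) = (-2 : ℂ) • b 2 := by
  rw [br_h]
  apply ext_fin <;>
    simp [b_apply]

theorem bb_0_2 : br (b 0) (b 2) = (1 : ℂ) • b 1 := by
  rw [br_e]
  apply ext_fin <;>
    simp [b_apply]

theorem bb_1_3 : br (b 1) (b 3) = (4 : ℂ) • b 3 := by
  rw [br_h]
  apply ext_fin <;>
    simp [b_apply]

theorem bb_0_3 : br (b 0) (b 3) = 0 := by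
  rw [br_e]
  apply ext_fin <;>
    simp [b_apply]

theorem bb_1_8 : br (b 1) (b 8) = (6 : ℂ) • b 8 := by
  rw [br_h]
  apply ext_fin <;>
    simp [b_apply]

theorem bb_0_8 : br (b 0) (b 8) = 0 := by
  rw [br_e]
  apply ext_fin <;>
    simp [b_apply]

theorem bb_2_3 : br (b 2) (b 3) = (4 : ℂ) • b 4 := by
  rw [br_f]
  apply ext_fin <;>
    simp [b_apply]

theorem bb_2_4 : br (b 2) (b 4) = (3 : ℂ) • b 5 := by
  rw [br_f]
  apply ext_fin <;>
    simp [b_apply]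

theorem bb_2_5 : br (b 2) (b 5) = (2 : ℂ) • b 6 := by
  rw [br_f]
  apply ext_fin <;>
    simp [b_apply]

theorem bb_2_6 : br (b 2) (b 6) = (1 : ℂ) • b 7 := by
  rw [br_f]
  apply ext_fin <;>
    simp [b_apply]

theorem bb_2_8 : br (b 2) (b 8) = (6 : ℂ) • b 9 := by
  rw [br_f]
  apply ext_fin <;>
    simp [b_apply]

theorem bb_2_9 : br (b 2) (b 9) = (5 : ℂ) • b 10 := by
  rw [br_f]
  apply ext_fin <;>
    simp [b_apply]

theorem bb_2_10 : br (b 2) (b 10) = (4 : ℂ) • b 11 := by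
  rw [br_f]
  apply ext_fin <;>
    simp [b_apply]

theorem bb_2_11 : br (b 2) (b 11) = (3 : ℂ) • b 12 := by
  rw [br_f]
  apply ext_fin <;>
    simp [b_apply]

theorem bb_2_12 : br (b 2) (b 12) = (2 : ℂ) • b 13 := by
  rw [br_f]
  apply ext_fin <;>
    simp [b_apply]

theorem bb_2_13 : br (b 2) (b 13) = (1 : ℂ) • b 14 := by
  rw [br_f]
  apply ext_fin <;>
    simp [b_apply]

theorem bb_2_15 : br (b 2) (b 15) = (6 : ℂ) • b 16 := by
  rw [br_f]
  apply ext_fin <;>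
    simp [b_apply]

theorem bb_2_16 : br (b 2) (b 16) = (5 : ℂ) • b 17 := by
  rw [br_f]
  apply ext_fin <;>
    simp [b_apply]

theorem bb_2_17 : br (b 2) (b 17) = (4 : ℂ) • b 18 := by
  rw [br_f]
  apply ext_fin <;>
    simp [b_apply]

theorem bb_2_18 : br (b 2) (b 18) = (3 : ℂ) • b 19 := by
  rw [br_f]
  apply ext_fin <;>
    simp [b_apply]

theorem bb_2_19 : br (b 2) (b 19) = (2 : ℂ) • b 20 := by
  rw [br_f]
  apply ext_fin <;>
    simp [b_apply]

theorem bb_2_20 : br (b 2) (b 20) = (1 : ℂ) • b 21 := by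
  rw [br_f]
  apply ext_fin <;>
    simp [b_apply]

theorem bb_2_22 : br (b 2) (b 22) = (2 : ℂ) • b 23 := by
  rw [br_f]
  apply ext_fin <;>
    simp [b_apply]

theorem bb_2_23 : br (b 2) (b 23) = (1 : ℂ) • b 24 := by
  rw [br_f]
  apply ext_fin <;>
    simp [b_apply]

theorem bb_3_6 : br (b 3) (b 6) = (2 : ℂ) • b 22 := by
  apply ext_fin <;>
    simp [b_apply]

theorem bb_3_12 : br (b 3) (b 12) = (4 : ℂ) • b 22 := by
  apply ext_fin <;>
    simp [b_apply]

theorem bb_3_19 : br (b 3) (b 19) = 0 := by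
  apply ext_fin <;>
    simp [b_apply]

theorem bb_8_11 : br (b 8) (b 11) = (3 : ℂ) • b 15 := by
  apply ext_fin <;>
    simp [b_apply]

theorem bb_15_11 : br (b 15) (b 11) = 0 := by
  apply ext_fin <;>
    simp [b_apply]

theorem bb_8_18 : br (b 8) (b 18) = 0 := by
  apply ext_fin <;>
    simp [b_apply]

theorem bb_13_15 : br (b 13) (b 15) = (-15 : ℂ) • b 22 := by
  apply ext_fin <;>
    simp [b_apply]

theorem bb_20_15 : br (b 20) (b 15) = 0 := by
  apply ext_fin <;>
    simp [b_apply]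

theorem bb_8_13 : br (b 8) (b 13) = (30 : ℂ) • b 17 := by
  apply ext_fin <;>
    simp [b_apply]

theorem bb_15_13 : br (b 15) (b 13) = (15 : ℂ) • b 22 := by
  apply ext_fin <;>
    simp [b_apply]

theorem bb_8_20 : br (b 8) (b 20) = (15 : ℂ) • b 22 := by
  apply ext_fin <;>
    simp [b_apply]

/-- Every basis vector is a bracket. -/
theorem b_eq_br (k : Fin 25) : ∃ x y, b k = br x y := by
  have key : ∀ {i j k : Fin 25} {c : ℂ}, c ≠ 0 → br (b i) (b j) = c • b k →
      ∃ x y, b k = br x y := by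
    intro i j k c hc h
    refine ⟨c⁻¹ • b i, b j, ?_⟩
    rw [br_smul_left, h, smul_smul, inv_mul_cancel₀ hc, one_smul]
  revert k
  apply forall_fin
  · exact key (by norm_num) bb_1_0
  · exact key (by norm_num) bb_0_2
  · exact key (by norm_num) bb_1_2
  · exact key (by norm_num) bb_1_3
  · exact key (by norm_num) bb_2_3
  · exact key (by norm_num) bb_2_4
  · exact key (by norm_num) bb_2_5
  · exact key (by norm_num) bb_2_6
  · exact key (by norm_num) bb_1_8
  · exact key (by norm_num) bb_2_8
  · exact key (by norm_num) bb_2_9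
  · exact key (by norm_num) bb_2_10
  · exact key (by norm_num) bb_2_11
  · exact key (by norm_num) bb_2_12
  · exact key (by norm_num) bb_2_13
  · exact key (by norm_num) bb_8_11
  · exact key (by norm_num) bb_2_15
  · exact key (by norm_num) bb_2_16
  · exact key (by norm_num) bb_2_17
  · exact key (by norm_num) bb_2_18
  · exact key (by norm_num) bb_2_19
  · exact key (by norm_num) bb_2_20
  · exact key (by norm_num) bb_3_6
  · exact key (by norm_num) bb_2_22
  · exact key (by norm_num) bb_2_23

/-- The centre is trivial. -/
theorem center_zero (z : Fin 25 → ℂ) (hz : ∀ x, br x z = 0) : z = 0 := by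
  have e := (br_e z).symm.trans (hz (b 0))
  have h := (br_h z).symm.trans (hz (b 1))
  apply ext_fin
  · simpa using congrFun h 0
  · simpa using congrFun e 0
  · simpa using congrFun h 2
  · simpa using congrFun h 3
  · simpa using congrFun h 4
  · simpa using congrFun e 4
  · simpa using congrFun h 6
  · simpa using congrFun h 7
  · simpa using congrFun h 8
  · simpa using congrFun h 9
  · simpa using congrFun h 10
  · simpa using congrFun e 10
  · simpa using congrFun h 12
  · simpa using congrFun h 13
  · simpa using congrFun h 14
  · simpa using congrFun h 15
  · simpa using congrFun h 16
  · simpa using congrFun h 17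
  · simpa using congrFun e 17
  · simpa using congrFun h 19
  · simpa using congrFun h 20
  · simpa using congrFun h 21
  · simpa using congrFun h 22
  · simpa using congrFun e 22
  · simpa using congrFun h 24

/-- A derivation agrees on `sl₂` with an inner one. -/
theorem der_step1 (D : (Fin 25 → ℂ) →ₗ[ℂ] (Fin 25 → ℂ))
    (hD : ∀ x y, D (br x y) = br (D x) y + br x (D y)) :
    ∃ x, br x (b 0) = D (b 0) ∧ br x (b 1) = D (b 1) ∧ br x (b 2) = D (b 2) := by
  have E := hD (b 1) (b 0)
  have F := hD (b 1) (b 2)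
  have U := hD (b 0) (b 2)
  rw [bb_1_0, map_smul, br_skew (D (b 1)), br_e, br_h] at E
  rw [bb_1_2, map_smul, br_skew (D (b 1)), br_f, br_h] at F
  rw [bb_0_2, map_smul, br_skew (D (b 0)), br_f, br_e] at U
  generalize D (b 0) = v at *
  generalize D (b 1) = u at *
  generalize D (b 2) = w at *
  have E0 : (2 : ℂ) * v 0 = -((-2) * u 1) + ((2) * v 0) := congrFun E 0
  have F0 : (-2 : ℂ) * w 0 = -(0) + ((2) * w 0) := congrFun F 0
  have U0 : (1 : ℂ) * u 0 = -(0) + ((-2) * w 1) := congrFun U 0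
  have E1 : (2 : ℂ) * v 1 = -((1) * u 2) + ((0) * v 1) := congrFun E 1
  have U1 : (1 : ℂ) * u 1 = -((-1) * v 0) + ((1) * w 2) := congrFun U 1
  have E2 : (2 : ℂ) * v 2 = -(0) + ((-2) * v 2) := congrFun E 2
  have E3 : (2 : ℂ) * v 3 = -((1) * u 4) + ((4) * v 3) := congrFun E 3
  have F3 : (-2 : ℂ) * w 3 = -(0) + ((4) * w 3) := congrFun F 3
  have U3 : (1 : ℂ) * u 3 = -(0) + ((1) * w 4) := congrFun U 3
  have E4 : (2 : ℂ) * v 4 = -((2) * u 5) + ((2) * v 4) := congrFun E 4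
  have U4 : (1 : ℂ) * u 4 = -((4) * v 3) + ((2) * w 5) := congrFun U 4
  have E5 : (2 : ℂ) * v 5 = -((3) * u 6) + ((0) * v 5) := congrFun E 5
  have U5 : (1 : ℂ) * u 5 = -((3) * v 4) + ((3) * w 6) := congrFun U 5
  have E6 : (2 : ℂ) * v 6 = -((4) * u 7) + ((-2) * v 6) := congrFun E 6
  have U6 : (1 : ℂ) * u 6 = -((2) * v 5) + ((4) * w 7) := congrFun U 6
  have E7 : (2 : ℂ) * v 7 = -(0) + ((-4) * v 7) := congrFun E 7
  have E8 : (2 : ℂ) * v 8 = -((1) * u 9) + ((6) * v 8) := congrFun E 8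
  have F8 : (-2 : ℂ) * w 8 = -(0) + ((6) * w 8) := congrFun F 8
  have U8 : (1 : ℂ) * u 8 = -(0) + ((1) * w 9) := congrFun U 8
  have E9 : (2 : ℂ) * v 9 = -((2) * u 10) + ((4) * v 9) := congrFun E 9
  have U9 : (1 : ℂ) * u 9 = -((6) * v 8) + ((2) * w 10) := congrFun U 9
  have E10 : (2 : ℂ) * v 10 = -((3) * u 11) + ((2) * v 10) := congrFun E 10
  have U10 : (1 : ℂ) * u 10 = -((5) * v 9) + ((3) * w 11) := congrFun U 10
  have E11 : (2 : ℂ) * v 11 = -((4) * u 12) + ((0) * v 11) := congrFun E 11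
  have U11 : (1 : ℂ) * u 11 = -((4) * v 10) + ((4) * w 12) := congrFun U 11
  have E12 : (2 : ℂ) * v 12 = -((5) * u 13) + ((-2) * v 12) := congrFun E 12
  have U12 : (1 : ℂ) * u 12 = -((3) * v 11) + ((5) * w 13) := congrFun U 12
  have E13 : (2 : ℂ) * v 13 = -((6) * u 14) + ((-4) * v 13) := congrFun E 13
  have U13 : (1 : ℂ) * u 13 = -((2) * v 12) + ((6) * w 14) := congrFun U 13
  have E14 : (2 : ℂ) * v 14 = -(0) + ((-6) * v 14) := congrFun E 14
  have E15 : (2 : ℂ) * v 15 = -((1) * u 16) + ((6) * v 15) := congrFun E 15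
  have F15 : (-2 : ℂ) * w 15 = -(0) + ((6) * w 15) := congrFun F 15
  have U15 : (1 : ℂ) * u 15 = -(0) + ((1) * w 16) := congrFun U 15
  have E16 : (2 : ℂ) * v 16 = -((2) * u 17) + ((4) * v 16) := congrFun E 16
  have U16 : (1 : ℂ) * u 16 = -((6) * v 15) + ((2) * w 17) := congrFun U 16
  have E17 : (2 : ℂ) * v 17 = -((3) * u 18) + ((2) * v 17) := congrFun E 17
  have U17 : (1 : ℂ) * u 17 = -((5) * v 16) + ((3) * w 18) := congrFun U 17
  have E18 : (2 : ℂ) * v 18 = -((4) * u 19) + ((0) * v 18) := congrFun E 18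
  have U18 : (1 : ℂ) * u 18 = -((4) * v 17) + ((4) * w 19) := congrFun U 18
  have E19 : (2 : ℂ) * v 19 = -((5) * u 20) + ((-2) * v 19) := congrFun E 19
  have U19 : (1 : ℂ) * u 19 = -((3) * v 18) + ((5) * w 20) := congrFun U 19
  have E20 : (2 : ℂ) * v 20 = -((6) * u 21) + ((-4) * v 20) := congrFun E 20
  have U20 : (1 : ℂ) * u 20 = -((2) * v 19) + ((6) * w 21) := congrFun U 20
  have E21 : (2 : ℂ) * v 21 = -(0) + ((-6) * v 21) := congrFun E 21
  have E22 : (2 : ℂ) * v 22 = -((1) * u 23) + ((2) * v 22) := congrFun E 22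
  have F22 : (-2 : ℂ) * w 22 = -(0) + ((2) * w 22) := congrFun F 22
  have U22 : (1 : ℂ) * u 22 = -(0) + ((1) * w 23) := congrFun U 22
  have E23 : (2 : ℂ) * v 23 = -((2) * u 24) + ((0) * v 23) := congrFun E 23
  have U23 : (1 : ℂ) * u 23 = -((2) * v 22) + ((2) * w 24) := congrFun U 23
  have E24 : (2 : ℂ) * v 24 = -(0) + ((-2) * v 24) := congrFun E 24
  obtain ⟨x, x0, x1, x2, x3, x4, x5, x6, x7, x8, x9, x10, x11, x12, x13, x14, x15, x16, x17, x18, x19, x20, x21, x22, x23, x24⟩ : ∃ x : Fin 25 → ℂ, x 0 = (-1/2) * u 0 ∧ x 1 = (1/2) * v 0 ∧ x 2 = (1/2) * u 2 ∧ x 3 = (-1/4) * u 3 ∧ x 4 = (-1/2) * u 4 ∧ x 5 = (-1/2) * v 4 ∧ x 6 = (1/2) * u 6 ∧ x 7 = (1/4) * u 7 ∧ x 8 = (-1/6) * u 8 ∧ x 9 = (-1/4) * u 9 ∧ x 10 = (-1/2) * u 10 ∧ x 11 = (-1/3) * v 10 ∧ x 12 = (1/2) * u 12 ∧ x 13 =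 (1/4) * u 13 ∧ x 14 = (1/6) * u 14 ∧ x 15 = (-1/6) * u 15 ∧ x 16 = (-1/4) * u 16 ∧ x 17 = (-1/2) * u 17 ∧ x 18 = (-1/3) * v 17 ∧ x 19 = (1/2) * u 19 ∧ x 20 = (1/4) * u 20 ∧ x 21 = (1/6) * u 21 ∧ x 22 = (-1/2) * u 22 ∧ x 23 = (-1) * v 22 ∧ x 24 = (1/2) * u 24 :=
    ⟨![(-1/2) * u 0, (1/2) * v 0, (1/2) * u 2, (-1/4) * u 3, (-1/2) * u 4, (-1/2) * v 4, (1/2) * u 6, (1/4) * u 7, (-1/6) * u 8, (-1/4) * u 9, (-1/2) * u 10, (-1/3) * v 10, (1/2) * u 12, (1/4) * u 13, (1/6) * u 14, (-1/6) * u 15, (-1/4) * u 16, (-1/2) * u 17, (-1/3) * v 17, (1/2) * u 19, (1/4) * u 20, (1/6) * u 21, (-1/2) * u 22, (-1) * v 22, (1/2) * u 24], rfl, rfl, rfl, rfl, rfl, rfl, rfl, rfl, rfl, rfl, rfl, rfl, rfl, rfl, rfl, rfl, rfl, rfl, rfl, rfl, rfl, rfl, rfl, rfl, rfl⟩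
  refine ⟨x, ?_, ?_, ?_⟩
  · rw [br_skew, br_e]
    apply ext_fin
    · change -((-2) * x 1) = v 0
      linear_combination (2) * x1
    · change -((1) * x 2) = v 1
      linear_combination (-1/2) * E1 + (-1) * x2
    · change -(0) = v 2
      linear_combination (-1/4) * E2
    · change -((1) * x 4) = v 3
      linear_combination (1/2) * E3 + (-1) * x4
    · change -((2) * x 5) = v 4
      linear_combination (-2) * x5
    · change -((3) * x 6) = v 5
      linear_combination (-1/2) * E5 + (-3) * x6
    · change -((4) * x 7) = v 6
      linear_combination (-1/4) * E6 + (-4) * x7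
    · change -(0) = v 7
      linear_combination (-1/6) * E7
    · change -((1) * x 9) = v 8
      linear_combination (1/4) * E8 + (-1) * x9
    · change -((2) * x 10) = v 9
      linear_combination (1/2) * E9 + (-2) * x10
    · change -((3) * x 11) = v 10
      linear_combination (-3) * x11
    · change -((4) * x 12) = v 11
      linear_combination (-1/2) * E11 + (-4) * x12
    · change -((5) * x 13) = v 12
      linear_combination (-1/4) * E12 + (-5) * x13
    · change -((6) * x 14) = v 13
      linear_combination (-1/6) * E13 + (-6) * x14
    · change -(0) = v 14
      linear_combination (-1/8) * E14
    · change -((1) * x 16) = v 15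
      linear_combination (1/4) * E15 + (-1) * x16
    · change -((2) * x 17) = v 16
      linear_combination (1/2) * E16 + (-2) * x17
    · change -((3) * x 18) = v 17
      linear_combination (-3) * x18
    · change -((4) * x 19) = v 18
      linear_combination (-1/2) * E18 + (-4) * x19
    · change -((5) * x 20) = v 19
      linear_combination (-1/4) * E19 + (-5) * x20
    · change -((6) * x 21) = v 20
      linear_combination (-1/6) * E20 + (-6) * x21
    · change -(0) = v 21
      linear_combination (-1/8) * E21
    · change -((1) * x 23) = v 22
      linear_combination (-1) * x23
    · change -((2) * x 24) = v 23
      linear_combination (-1/2) * E23 + (-2) * x24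
    · change -(0) = v 24
      linear_combination (-1/4) * E24
  · rw [br_skew, br_h]
    apply ext_fin
    · change -((2) * x 0) = u 0
      linear_combination (-2) * x0
    · change -((0) * x 1) = u 1
      linear_combination (1/2) * E0
    · change -((-2) * x 2) = u 2
      linear_combination (2) * x2
    · change -((4) * x 3) = u 3
      linear_combination (-4) * x3
    · change -((2) * x 4) = u 4
      linear_combination (-2) * x4
    · change -((0) * x 5) = u 5
      linear_combination (-1/2) * E4
    · change -((-2) * x 6) = u 6
      linear_combination (2) * x6
    · change -((-4) * x 7) = u 7
      linear_combination (4) * x7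
    · change -((6) * x 8) = u 8
      linear_combination (-6) * x8
    · change -((4) * x 9) = u 9
      linear_combination (-4) * x9
    · change -((2) * x 10) = u 10
      linear_combination (-2) * x10
    · change -((0) * x 11) = u 11
      linear_combination (-1/3) * E10
    · change -((-2) * x 12) = u 12
      linear_combination (2) * x12
    · change -((-4) * x 13) = u 13
      linear_combination (4) * x13
    · change -((-6) * x 14) = u 14
      linear_combination (6) * x14
    · change -((6) * x 15) = u 15
      linear_combination (-6) * x15
    · change -((4) * x 16) = u 16
      linear_combination (-4) * x16
    · change -((2) * x 17) = u 17
      linear_combination (-2) * x17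
    · change -((0) * x 18) = u 18
      linear_combination (-1/3) * E17
    · change -((-2) * x 19) = u 19
      linear_combination (2) * x19
    · change -((-4) * x 20) = u 20
      linear_combination (4) * x20
    · change -((-6) * x 21) = u 21
      linear_combination (6) * x21
    · change -((2) * x 22) = u 22
      linear_combination (-2) * x22
    · change -((0) * x 23) = u 23
      linear_combination (-1) * E22
    · change -((-2) * x 24) = u 24
      linear_combination (2) * x24
  · rw [br_skew, br_f]
    apply ext_fin
    · change -(0) = w 0
      linear_combination (1/4) * F0
    · change -((-1) * x 0) = w 1
      linear_combination (-1/2) * U0 + (1) * x0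
    · change -((2) * x 1) = w 2
      linear_combination (1) * U1 + (1/2) * E0 + (-2) * x1
    · change -(0) = w 3
      linear_combination (1/6) * F3
    · change -((4) * x 3) = w 4
      linear_combination (1) * U3 + (-4) * x3
    · change -((3) * x 4) = w 5
      linear_combination (1) * E3 + (1/2) * U4 + (-3) * x4
    · change -((2) * x 5) = w 6
      linear_combination (1/3) * U5 + (-1/6) * E4 + (-2) * x5
    · change -((1) * x 6) = w 7
      linear_combination (-1/4) * E5 + (1/4) * U6 + (-1) * x6
    · change -(0) = w 8
      linear_combination (1/8) * F8
    · change -((6) * x 8) = w 9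
      linear_combination (1) * U8 + (-6) * x8
    · change -((5) * x 9) = w 10
      linear_combination (3/4) * E8 + (1/2) * U9 + (-5) * x9
    · change -((4) * x 10) = w 11
      linear_combination (5/6) * E9 + (1/3) * U10 + (-4) * x10
    · change -((3) * x 11) = w 12
      linear_combination (1/4) * U11 + (-1/12) * E10 + (-3) * x11
    · change -((2) * x 12) = w 13
      linear_combination (-3/10) * E11 + (1/5) * U12 + (-2) * x12
    · change -((1) * x 13) = w 14
      linear_combination (-1/12) * E12 + (1/6) * U13 + (-1) * x13
    · change -(0) = w 15
      linear_combination (1/8) * F15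
    · change -((6) * x 15) = w 16
      linear_combination (1) * U15 + (-6) * x15
    · change -((5) * x 16) = w 17
      linear_combination (3/4) * E15 + (1/2) * U16 + (-5) * x16
    · change -((4) * x 17) = w 18
      linear_combination (5/6) * E16 + (1/3) * U17 + (-4) * x17
    · change -((3) * x 18) = w 19
      linear_combination (1/4) * U18 + (-1/12) * E17 + (-3) * x18
    · change -((2) * x 19) = w 20
      linear_combination (-3/10) * E18 + (1/5) * U19 + (-2) * x19
    · change -((1) * x 20) = w 21
      linear_combination (-1/12) * E19 + (1/6) * U20 + (-1) * x20
    · change -(0) = w 22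
      linear_combination (1/4) * F22
    · change -((2) * x 22) = w 23
      linear_combination (1) * U22 + (-2) * x22
    · change -((1) * x 23) = w 24
      linear_combination (1/2) * U23 + (-1/2) * E22 + (-1) * x23

theorem wt {m c y : ℂ} (h : m ≠ c) (e : m * y = c * y) : y = 0 := by
  by_contra hy
  exact h (mul_right_cancel₀ hy e)

/-- A derivation vanishing on `sl₂` is zero on the basis. -/
theorem der_step2 (D : (Fin 25 → ℂ) →ₗ[ℂ] (Fin 25 → ℂ))
    (hD : ∀ x y, D (br x y) = br (D x) y + br x (D y))
    (h0 : D (b 0) = 0) (h1 : D (b 1) = 0) (h2 : D (b 2) = 0) : ∀ k, D (b k) = 0 := by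
  have zl : ∀ y, br 0 y = 0 := fun y => by
    simpa using br_smul_left 0 0 y
  have zr : ∀ y, br y 0 = 0 := fun y => by
    simpa using br_smul_right 0 y 0
  -- the image of the highest weight vectors
  obtain ⟨l, hY0⟩ : ∃ l : ℂ, D (b 3) = l • b 3 := by
    have H := hD (b 1) (b 3)
    have E := hD (b 0) (b 3)
    rw [bb_1_3, map_smul, h1, zl, zero_add, br_h] at H
    rw [bb_0_3, map_zero, h0, zl, zero_add, br_e] at E
    generalize D (b 3) = y at *
    refine ⟨y 3, ?_⟩
    apply ext_fin
    · simpa [b_apply] using wt (by norm_num) (congrFun H 0)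
    · simpa [b_apply] using wt (by norm_num) (congrFun H 1)
    · simpa [b_apply] using wt (by norm_num) (congrFun H 2)
    · simp [b_apply]
    · simpa [b_apply] using wt (by norm_num) (congrFun H 4)
    · simpa [b_apply] using wt (by norm_num) (congrFun H 5)
    · simpa [b_apply] using wt (by norm_num) (congrFun H 6)
    · simpa [b_apply] using wt (by norm_num) (congrFun H 7)
    · simpa [b_apply] using wt (by norm_num) (congrFun H 8)
    · simpa [b_apply] using (congrFun E 8).symm
    · simpa [b_apply] using wt (by norm_num) (congrFun H 10)
    · simpa [b_apply] using wt (by norm_num) (congrFun H 11)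
    · simpa [b_apply] using wt (by norm_num) (congrFun H 12)
    · simpa [b_apply] using wt (by norm_num) (congrFun H 13)
    · simpa [b_apply] using wt (by norm_num) (congrFun H 14)
    · simpa [b_apply] using wt (by norm_num) (congrFun H 15)
    · simpa [b_apply] using (congrFun E 15).symm
    · simpa [b_apply] using wt (by norm_num) (congrFun H 17)
    · simpa [b_apply] using wt (by norm_num) (congrFun H 18)
    · simpa [b_apply] using wt (by norm_num) (congrFun H 19)
    · simpa [b_apply] using wt (by norm_num) (congrFun H 20)
    · simpa [b_apply] using wt (by norm_num) (congrFun H 21)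
    · simpa [b_apply] using wt (by norm_num) (congrFun H 22)
    · simpa [b_apply] using wt (by norm_num) (congrFun H 23)
    · simpa [b_apply] using wt (by norm_num) (congrFun H 24)
  obtain ⟨a, c, hP0⟩ : ∃ a c : ℂ, D (b 8) = a • b 8 + c • b 15 := by
    have H := hD (b 1) (b 8)
    rw [bb_1_8, map_smul, h1, zl, zero_add, br_h] at H
    generalize D (b 8) = y at *
    refine ⟨y 8, y 15, ?_⟩
    apply ext_fin
    · simpa [b_apply] using wt (by norm_num) (congrFun H 0)
    · simpa [b_apply] using wt (by norm_num) (congrFun H 1)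
    · simpa [b_apply] using wt (by norm_num) (congrFun H 2)
    · simpa [b_apply] using wt (by norm_num) (congrFun H 3)
    · simpa [b_apply] using wt (by norm_num) (congrFun H 4)
    · simpa [b_apply] using wt (by norm_num) (congrFun H 5)
    · simpa [b_apply] using wt (by norm_num) (congrFun H 6)
    · simpa [b_apply] using wt (by norm_num) (congrFun H 7)
    · simp [b_apply]
    · simpa [b_apply] using wt (by norm_num) (congrFun H 9)
    · simpa [b_apply] using wt (by norm_num) (congrFun H 10)
    · simpa [b_apply] using wt (by norm_num) (congrFun H 11)
    · simpa [b_apply] using wt (by norm_num) (congrFun H 12)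
    · simpa [b_apply] using wt (by norm_num) (congrFun H 13)
    · simpa [b_apply] using wt (by norm_num) (congrFun H 14)
    · simp [b_apply]
    · simpa [b_apply] using wt (by norm_num) (congrFun H 16)
    · simpa [b_apply] using wt (by norm_num) (congrFun H 17)
    · simpa [b_apply] using wt (by norm_num) (congrFun H 18)
    · simpa [b_apply] using wt (by norm_num) (congrFun H 19)
    · simpa [b_apply] using wt (by norm_num) (congrFun H 20)
    · simpa [b_apply] using wt (by norm_num) (congrFun H 21)
    · simpa [b_apply] using wt (by norm_num) (congrFun H 22)
    · simpa [b_apply] using wt (by norm_num) (congrFun H 23)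
    · simpa [b_apply] using wt (by norm_num) (congrFun H 24)
  -- moving down by `f`
  have fY : ∀ {i j : Fin 25} {t s : ℂ}, t ≠ 0 → br (b 2) (b i) = t • b j →
      D (b i) = s • b i → D (b j) = s • b j := by
    intro i j t s ht h hi
    have := hD (b 2) (b i)
    rw [h, map_smul, h2, zl, zero_add, hi, br_smul_right, h, smul_comm] at this
    exact smul_right_injective _ ht this
  have fP : ∀ {i j i' j' : Fin 25} {t : ℂ}, t ≠ 0 → br (b 2) (b i) = t • b j →
      br (b 2) (b i') = t • b j' →
      D (b i) = a • b i + c • b i' → D (b j) = a • b j + c • b j' := by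
    intro i j i' j' t ht h h' hi
    have := hD (b 2) (b i)
    rw [h, map_smul, h2, zl, zero_add, hi, br_add_right, br_smul_right, br_smul_right, h, h',
      smul_comm a, smul_comm c, ← smul_add] at this
    exact smul_right_injective _ ht this
  have hY1 := fY (by norm_num) bb_2_3 hY0
  have hY2 := fY (by norm_num) bb_2_4 hY1
  have hY3 := fY (by norm_num) bb_2_5 hY2
  have hY4 := fY (by norm_num) bb_2_6 hY3
  have hP1 := fP (by norm_num) bb_2_8 bb_2_15 hP0
  have hP2 := fP (by norm_num) bb_2_9 bb_2_16 hP1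
  have hP3 := fP (by norm_num) bb_2_10 bb_2_17 hP2
  have hP4 := fP (by norm_num) bb_2_11 bb_2_18 hP3
  have hP5 := fP (by norm_num) bb_2_12 bb_2_19 hP4
  have hP6 := fP (by norm_num) bb_2_13 bb_2_20 hP5
  have hQ0 : D (b 15) = (2 * a) • b 15 := by
    have := hD (b 8) (b 11)
    rw [bb_8_11, map_smul, hP0, hP3, br_add_left, br_add_right, br_smul_left, br_smul_left,
      br_smul_right, br_smul_right, bb_8_11, bb_15_11, bb_8_18] at this
    refine smul_right_injective _ (by norm_num : (3 : ℂ) ≠ 0) (this.trans ?_)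
    module
  have hQ1 := fY (by norm_num) bb_2_15 hQ0
  have hQ2 := fY (by norm_num) bb_2_16 hQ1
  have hQ3 := fY (by norm_num) bb_2_17 hQ2
  have hQ4 := fY (by norm_num) bb_2_18 hQ3
  have hQ5 := fY (by norm_num) bb_2_19 hQ4
  have hQ6 := fY (by norm_num) bb_2_20 hQ5
  have hX0 : D (b 22) = (2 * l) • b 22 := by
    have := hD (b 3) (b 6)
    rw [bb_3_6, map_smul, hY0, hY3, br_smul_left, br_smul_right, bb_3_6] at this
    refine smul_right_injective _ (by norm_num : (2 : ℂ) ≠ 0) (this.trans ?_)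
    module
  have hX1 := fY (by norm_num) bb_2_22 hX0
  have hX2 := fY (by norm_num) bb_2_23 hX1
  have b22 : b 22 22 = 1 := by simp [b_apply]
  have b17 : b 17 22 = 0 := by simp [b_apply]
  have r1 : l = a := by
    have := hD (b 3) (b 12)
    rw [bb_3_12, map_smul, hY0, hP4, br_add_right, br_smul_left,
      br_smul_right, br_smul_right, bb_3_12, bb_3_19, hX0] at this
    have := congrFun this 22
    simp only [Pi.add_apply, Pi.smul_apply, smul_eq_mul, b22, Pi.zero_apply] at this
    linear_combination (1/4) * this
  have r2 : 2 * l = 3 * a := by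
    have := hD (b 13) (b 15)
    rw [bb_13_15, map_smul, hP5, hQ0, br_add_left, br_smul_left, br_smul_left,
      br_smul_right, bb_13_15, bb_20_15, hX0] at this
    have := congrFun this 22
    simp only [Pi.add_apply, Pi.smul_apply, smul_eq_mul, b22, Pi.zero_apply] at this
    linear_combination (-1/15) * this
  have r3 : c = 0 := by
    have := hD (b 8) (b 13)
    rw [bb_8_13, map_smul, hP0, hP5, hQ2, br_add_left, br_add_right, br_smul_left, br_smul_left,
      br_smul_right, br_smul_right, bb_8_13, bb_15_13, bb_8_20] at this
    have := congrFun this 22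
    simp only [Pi.add_apply, Pi.smul_apply, smul_eq_mul, b22, b17] at this
    linear_combination (-1/30) * this
  have ha : a = 0 := by linear_combination 2 * r1 - r2
  have hl : l = 0 := r1.trans ha
  subst r3 hl ha
  simp only [mul_zero, zero_smul, add_zero] at *
  exact forall_fin h0 h1 h2 hY0 hY1 hY2 hY3 hY4 hP0 hP1 hP2 hP3 hP4 hP5 hP6 hQ0 hQ1 hQ2 hQ3 hQ4 hQ5 hQ6 hX0 hX1 hX2

theorem der_inner (D : (Fin 25 → ℂ) →ₗ[ℂ] (Fin 25 → ℂ))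
    (hD : ∀ x y, D (br x y) = br (D x) y + br x (D y)) :
    ∃ x, ∀ y, D y = br x y := by
  obtain ⟨x, e0, e1, e2⟩ := der_step1 D hD
  refine ⟨x, fun y => ?_⟩
  let A : (Fin 25 → ℂ) →ₗ[ℂ] (Fin 25 → ℂ) :=
    { toFun := br x
      map_add' := br_add_right x
      map_smul' := fun c z => br_smul_right c x z }
  have hA : ∀ z, A z = br x z := fun _ => rfl
  have key := der_step2 (D - A) (fun p q => by
      simp only [LinearMap.sub_apply, hA, hD, br_sub_left, br_sub_right]
      rw [br_jacobi x p q]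
      abel)
    (by simp [hA, e0]) (by simp [hA, e1]) (by simp [hA, e2])
  have h : (D - A) y = 0 := by
    rw [sum_b y, map_sum]
    exact Finset.sum_eq_zero fun i _ => by rw [map_smul, key, smul_zero]
  rw [LinearMap.sub_apply, hA, sub_eq_zero] at h
  exact h

/-- The bracket `P × P → Q` etc. makes `G` a Lie ring. -/
noncomputable instance : LieRing G where
  bracket x y := br x y
  add_lie := br_add_left
  lie_add := br_add_right
  lie_self := br_self
  leibniz_lie := br_jacobi

noncomputable instance : LieAlgebra ℂ G where
  lie_smul := br_smul_right

instance : FiniteDimensional ℂ G := inferInstanceAs (FiniteDimensional ℂ (Fin 25 → ℂ))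

theorem finrank_G : Module.finrank ℂ G = 25 := Module.finrank_fin_fun ℂ

theorem center_G : LieAlgebra.center ℂ G = ⊥ := by
  rw [LieSubmodule.eq_bot_iff]
  intro z hz
  rw [LieModule.mem_maxTrivSubmodule] at hz
  exact center_zero z hz

theorem perfect_G : Symp.IsPerfectLie G := by
  rw [Symp.IsPerfectLie, eq_top_iff]
  intro v _
  have hb : ∀ k, (b k : G) ∈ ⁅(⊤ : LieIdeal ℂ G), (⊤ : LieIdeal ℂ G)⁆ := by
    intro k
    obtain ⟨x, y, h⟩ := b_eq_br k
    rw [h]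
    exact LieSubmodule.lie_mem_lie (N := (⊤ : LieIdeal ℂ G)) (I := ⊤) (x := (x : G)) (m := (y : G))
      (LieSubmodule.mem_top _) (LieSubmodule.mem_top _)
  have hs : v = ∑ i, (v i • (b i : G) : G) := sum_b v
  rw [hs]
  exact sum_mem fun i _ => SMulMemClass.smul_mem (v i) (hb i)

theorem inner_G (D : LieDerivation ℂ G G) : Symp.IsInnerDer D :=
  der_inner (D : G →ₗ[ℂ] G) fun x y => by
    have h := D.apply_lie_eq_add (x : G) (y : G)
    rw [add_comm] at h
    exact h

theorem br_X (x v : Fin 25 → ℂ) (z : ∀ i : Fin 25, i < 22 → v i = 0) :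
    ∀ i : Fin 25, i < 22 → br x v i = 0 := by
  apply forall_fin <;> intro h <;> first
    | exact absurd h (by decide)
    | simp [z]

theorem br_XX (x y : Fin 25 → ℂ) (zx : ∀ i : Fin 25, i < 22 → x i = 0)
    (zy : ∀ i : Fin 25, i < 22 → y i = 0) : br x y = 0 := by
  apply ext_fin <;> simp [zx, zy]

/-- The ideal `X`, spanned by the last three basis vectors. -/
noncomputable def idealX : LieIdeal ℂ G where
  carrier := {v | ∀ i : Fin 25, i < 22 → v i = 0}
  add_mem' := by
    intro v w hv hw i hi
    change v i + w i = 0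
    rw [hv i hi, hw i hi, add_zero]
  zero_mem' := fun _ _ => rfl
  smul_mem' := by
    intro c v hv i hi
    change c * v i = 0
    rw [hv i hi, mul_zero]
  lie_mem := by
    intro x v hv
    exact br_X x v hv

theorem abelian_X : IsLieAbelian idealX :=
  ⟨fun x y => Subtype.ext (br_XX (x : G) (y : G) x.2 y.2)⟩


theorem radical_G : LieAlgebra.radical ℂ G ≠ ⊥ := by
  intro h
  have := abelian_X
  have hs : LieAlgebra.IsSolvable idealX := inferInstance
  have hle : idealX ≤ LieAlgebra.radical ℂ G := (LieAlgebra.LieIdeal.solvable_iff_le_radical ℂ G idealX).mp hs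
  rw [h, le_bot_iff, LieSubmodule.eq_bot_iff] at hle
  have hm : (b 22 : G) ∈ idealX := by
    intro i hi
    exact if_neg (ne_of_lt hi)
  have h0 : b 22 = 0 := hle _ hm
  have h1 := congrFun h0 22
  simp [b_apply] at h1

end Construction

/-- there exists a 25-dimensional complex Lie algebra that is sympathetic
but not semisimple. -/
theorem stmt19 :
    ∃ (g : Type) (_ : LieRing g) (_ : LieAlgebra ℂ g) (_ : FiniteDimensional ℂ g),
      Module.finrank ℂ g = 25 ∧ Symp.IsSympathetic g ∧ LieAlgebra.radical ℂ g ≠ ⊥ :=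
  ⟨Construction.G, inferInstance, inferInstance, inferInstance, Construction.finrank_G,
    ⟨Construction.center_G, Construction.perfect_G, Construction.inner_G⟩, Construction.radical_G⟩
end
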